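/- arXiv:2403.17079 — 2 statements merged into one kernel-verified Lean document; each statement's English description precedes it below -/
import Mathlib

section
/- Let (Q, m, k) be a commutative Noetherian local ring and let f, g be an exact pair of zerodivisors with f ∈ m², i.e. f and g are nonzero elements of m with f ∈ m², ann_Q(f) = (g) and ann_Q(g) = (f). Set R = Q/(f). Then the residue field has the same Betti numbers over Q and over R: β_i^Q(k) = β_i^R(k) for every integer i ≥ 0; that is, P_k^Q(t) = P_k^R(t). -/
open CategoryTheory TensorProduct

/-- The `i`-th Betti number of a module `M` over a local ring `A`:
`β_i^A(M) = dim_k Tor_i^A(M, k)`, computed as the `k`-dimension of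
`k ⊗_A Tor_i^A(M, k)` (the two agree since `Tor_i^A(M, k)` is a `k`-vector
space, being annihilated by the maximal ideal of `A`). -/
noncomputable def bettiNumber (A : Type) [CommRing A] [IsLocalRing A]
    (M : Type) [AddCommGroup M] [Module A M] (i : ℕ) : ℕ :=
  Module.finrank (IsLocalRing.ResidueField A)
    (IsLocalRing.ResidueField A ⊗[A]
      (((Tor (ModuleCat A) i).obj (ModuleCat.of A M)).obj
        (ModuleCat.of A (IsLocalRing.ResidueField A))))

/-! Let `M` be the quotient of a free presentation of `𝔪` by a maximal submodule of its kernel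
containing the Koszul boundaries but not `g • α`, where `α` is a lift of `f`; such a submodule
exists because a Koszul boundary bounds an element with divided powers, whereas `g • α` cannot
bound one. The induced map `φ : M → Q` has image `𝔪`, its kernel is a copy of `k` spanned by
`g • α`, and `φ u • v = φ v • u`.

Let `(V, d)` be a free resolution of `M` spliced with `φ`. Each element of `𝔪` acts
nullhomotopically on `V`. Write `f = ∑ bᵢ cᵢ` with `bᵢ, cᵢ ∈ 𝔪`. The substitution `Xᵢ ↦ bᵢ X` in a
system of higher homotopies for the `cᵢ` gives a power series `τ = d + ∑ σⱼ Xʲ` with `τ² = f X`, in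
which all the `σⱼ` vanish modulo `𝔪`. Let `X` act on `V ⊗ Γ[y]` by lowering divided powers of `y`.
Then `τ (X)` induces the differential of a free resolution of `k` over `Q ⧸ (f)`, and `τ (g X)`,
whose square is `g f X = 0`, is that of one over `Q`. Both are congruent to `d ⊗ 1` modulo `𝔪`, so
the two resolutions become equal after tensoring with `k`. -/

universe u

namespace ExactPairBetti

/-! ### Koszul boundaries and divided powers -/

section ExactPair

/-- Multiplication by `f` and multiplication by `g` on `M` each have the image of the other as
kernel. For `M` the ring itself this is an exact pair of zerodivisors. -/
structure IsExactPairOn {Q : Type*} [CommRing Q] (f g : Q) (M : Type*) [AddCommGroup M]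
    [Module Q M] : Prop where
  left : ∀ w : M, f • w = 0 ↔ ∃ v, w = g • v
  right : ∀ w : M, g • w = 0 ↔ ∃ v, w = f • v

variable {Q M N : Type*} [CommRing Q] [AddCommGroup M] [Module Q M] [AddCommGroup N] [Module Q N]
  {f g : Q}

lemma IsExactPairOn.symm (h : IsExactPairOn f g M) : IsExactPairOn g f M := ⟨h.right, h.left⟩

lemma IsExactPairOn.of_linearEquiv (h : IsExactPairOn f g M) (e : M ≃ₗ[Q] N) :
    IsExactPairOn f g N := by
  refine ⟨fun w => ?_, fun w => ?_⟩
  · rw [← e.symm.map_eq_zero_iff, map_smul, h.left, ← e.toEquiv.exists_congr_right]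
    simp [LinearEquiv.symm_apply_eq]
  · rw [← e.symm.map_eq_zero_iff, map_smul, h.right, ← e.toEquiv.exists_congr_right]
    simp [LinearEquiv.symm_apply_eq]

lemma smul_finsupp_eq_zero_iff {ι : Type*} (h : ∀ x : Q, f • x = 0 ↔ ∃ y, x = g • y)
    (w : ι →₀ Q) : f • w = 0 ↔ ∃ v, w = g • v := by
  classical
  constructor
  · intro hw
    choose! y hy using fun x => (h x).1
    refine ⟨Finsupp.onFinset w.support (fun i => if w i = 0 then 0 else y (w i))
      fun i hi => Finsupp.mem_support_iff.2 fun h => hi (if_pos h), ?_⟩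
    ext i
    by_cases hi : w i = 0
    · simp [hi]
    · simpa [hi] using hy (w i) (DFunLike.congr_fun hw i)
  · rintro ⟨v, rfl⟩
    ext i
    exact (h _).2 ⟨v i, rfl⟩

lemma IsExactPairOn.finsupp (h : IsExactPairOn f g Q) (ι : Type*) : IsExactPairOn f g (ι →₀ Q) :=
  ⟨smul_finsupp_eq_zero_iff h.left, smul_finsupp_eq_zero_iff h.right⟩

end ExactPair

section Koszul

variable {Q V : Type*} [CommRing Q] [AddCommGroup V] [Module Q V] (φ : V →ₗ[Q] Q)

/-- The differential of the Koszul complex of a linear form. -/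
def koszulDifferential : ExteriorAlgebra Q V →ₗ[Q] ExteriorAlgebra Q V :=
  CliffordAlgebra.contractLeft (Q := (0 : QuadraticForm Q V)) φ

lemma koszulDifferential_ι_mul (u : V) (x : ExteriorAlgebra Q V) :
    koszulDifferential φ (ExteriorAlgebra.ι Q u * x) =
      φ u • x - ExteriorAlgebra.ι Q u * koszulDifferential φ x :=
  CliffordAlgebra.contractLeft_ι_mul _ _ _

lemma koszulDifferential_one : koszulDifferential φ 1 = 0 :=
  CliffordAlgebra.contractLeft_one _ _

lemma koszulDifferential_koszulDifferential (x : ExteriorAlgebra Q V) :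
    koszulDifferential φ (koszulDifferential φ x) = 0 :=
  CliffordAlgebra.contractLeft_contractLeft _ _

lemma algebraMapInv_koszulDifferential_mem {I : Ideal Q} (hφ : ∀ v, φ v ∈ I)
    (x : ExteriorAlgebra Q V) : ExteriorAlgebra.algebraMapInv (koszulDifferential φ x) ∈ I := by
  induction x using CliffordAlgebra.left_induction with
  | algebraMap r => simp [koszulDifferential, CliffordAlgebra.contractLeft_algebraMap]
  | add x y hx hy => simpa only [map_add] using add_mem hx hy
  | ι_mul x v _ =>
    have hv : ExteriorAlgebra.algebraMapInv (ExteriorAlgebra.ι Q v) = 0 := by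
      simp [ExteriorAlgebra.algebraMapInv]
    change ExteriorAlgebra.algebraMapInv (koszulDifferential φ (ExteriorAlgebra.ι Q v * x)) ∈ I
    rw [koszulDifferential_ι_mul, map_sub, map_smul, map_mul, hv, zero_mul, sub_zero, smul_eq_mul]
    exact I.mul_mem_right _ (hφ v)

/-- The boundaries of degree one in the Koszul complex of a linear form. -/
def koszulBoundaries : Submodule Q V :=
  Submodule.span Q (Set.range fun p : V × V => φ p.1 • p.2 - φ p.2 • p.1)

lemma sub_mem_koszulBoundaries (u v : V) : φ u • v - φ v • u ∈ koszulBoundaries φ :=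
  Submodule.subset_span ⟨(u, v), rfl⟩

lemma koszulBoundaries_le_ker : koszulBoundaries φ ≤ LinearMap.ker φ := by
  rw [koszulBoundaries, Submodule.span_le]
  rintro _ ⟨⟨u, v⟩, rfl⟩
  simp [mul_comm]

/-- `w` bounds in the Koszul complex an even element which has divided powers there; the `n`-th
divided power is the `n`-th coefficient of the polynomial. -/
def BoundsDividedPowers (w : V) : Prop :=
  ∃ E : Polynomial (ExteriorAlgebra Q V), E.coeff 0 = 1 ∧
    ∀ n, koszulDifferential φ (E.coeff (n + 1)) = ExteriorAlgebra.ι Q w * E.coeff n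

variable {φ}

lemma koszulDifferential_ι_mul_ι_mul (u v : V) (x : ExteriorAlgebra Q V) :
    koszulDifferential φ (ExteriorAlgebra.ι Q u * ExteriorAlgebra.ι Q v * x) =
      ExteriorAlgebra.ι Q (φ u • v - φ v • u) * x +
        ExteriorAlgebra.ι Q u * ExteriorAlgebra.ι Q v * koszulDifferential φ x := by
  rw [mul_assoc, koszulDifferential_ι_mul, koszulDifferential_ι_mul, map_sub, map_smul, map_smul]
  noncomm_ring

lemma ι_mul_ι_mul_ι_comm (u v w : V) :
    ExteriorAlgebra.ι Q w * (ExteriorAlgebra.ι Q u * ExteriorAlgebra.ι Q v) =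
      ExteriorAlgebra.ι Q u * ExteriorAlgebra.ι Q v * ExteriorAlgebra.ι Q w := by
  have anti (a b : V) : ExteriorAlgebra.ι Q a * ExteriorAlgebra.ι Q b =
      -(ExteriorAlgebra.ι Q b * ExteriorAlgebra.ι Q a) :=
    eq_neg_of_add_eq_zero_left (ExteriorAlgebra.ι_add_mul_swap a b)
  rw [← mul_assoc, anti w u, neg_mul, mul_assoc, anti w v, mul_neg, neg_neg, mul_assoc]

lemma ι_mul_ι_mul_ι_eq_zero (u v : V) :
    ExteriorAlgebra.ι Q (φ u • v - φ v • u) *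
      (ExteriorAlgebra.ι Q u * ExteriorAlgebra.ι Q v) = 0 := by
  rw [map_sub, map_smul, map_smul, sub_mul, smul_mul_assoc, smul_mul_assoc, ι_mul_ι_mul_ι_comm,
    mul_assoc, ExteriorAlgebra.ι_sq_zero, ← mul_assoc, ExteriorAlgebra.ι_sq_zero]
  simp

-- The divided powers of `z + u ∧ v` are the coefficients of `exp (z X) * (1 + (u ∧ v) X)`.
lemma BoundsDividedPowers.add {w : V} (hw : BoundsDividedPowers φ w) (u v : V) :
    BoundsDividedPowers φ (w + (φ u • v - φ v • u)) := by
  obtain ⟨E, hE0, hE⟩ := hw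
  refine ⟨E + Polynomial.X * (Polynomial.C (ExteriorAlgebra.ι Q u * ExteriorAlgebra.ι Q v) * E),
    by simp [hE0], fun n => ?_⟩
  rw [Polynomial.coeff_add, Polynomial.coeff_X_mul, Polynomial.coeff_C_mul, map_add, hE,
    koszulDifferential_ι_mul_ι_mul, map_add, Polynomial.coeff_add, mul_add, add_mul, add_assoc]
  congr 2
  cases n with
  | zero => simp [hE0, koszulDifferential_one]
  | succ n =>
    rw [Polynomial.coeff_X_mul, Polynomial.coeff_C_mul, hE, ← mul_assoc, ← mul_assoc, add_mul,
      ι_mul_ι_mul_ι_comm, ι_mul_ι_mul_ι_eq_zero, add_zero]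

lemma boundsDividedPowers_of_mem_koszulBoundaries {w : V} (hw : w ∈ koszulBoundaries φ) :
    BoundsDividedPowers φ w := by
  suffices ∀ (c : Q) (w₀ : V), BoundsDividedPowers φ w₀ → BoundsDividedPowers φ (w₀ + c • w) by
    simpa using this 1 0 ⟨1, by simp, fun n => by simp [Polynomial.coeff_one]⟩
  refine Submodule.span_induction ?_ ?_ ?_ ?_ hw
  · rintro _ ⟨⟨u, v⟩, rfl⟩ c w₀ hw₀
    have hc : c • (φ u • v - φ v • u) = φ (c • u) • v - φ v • (c • u) := by
      simp only [map_smul]; module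
    rw [hc]
    exact hw₀.add _ _
  · simp
  · intro x y _ _ hx hy c w₀ hw₀
    rw [smul_add, ← add_assoc]
    exact hy c _ (hx c _ hw₀)
  · intro a x _ hx c w₀ hw₀
    rw [smul_smul]
    exact hx _ _ hw₀

end Koszul

section NotBoundary

variable {Q ι : Type*} [CommRing Q] {f g : Q}

lemma IsExactPairOn.exteriorAlgebra (h : IsExactPairOn f g Q) :
    IsExactPairOn f g (ExteriorAlgebra Q (ι →₀ Q)) :=
  let _ : LinearOrder ι := IsWellOrder.linearOrder WellOrderingRel
  (h.finsupp _).of_linearEquiv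
    (Finsupp.basisSingleOne (R := Q) (ι := ι)).ExteriorAlgebra.repr.symm

variable {φ : (ι →₀ Q) →ₗ[Q] Q} {a : ι →₀ Q}

/- If `d E₍ₙ₊₁₎ = g a Eₙ` and `E₍ₙ₊₁₎ = d C + g D`, then `g (a Eₙ - d D) = 0`, so
`a Eₙ - d D = f C'`, and applying `d` gives `f (Eₙ - d C') = 0`. -/
lemma exists_eq_koszulDifferential_add_smul (hfg : IsExactPairOn f g Q)
    {E E' : ExteriorAlgebra Q (ι →₀ Q)}
    (hE : koszulDifferential φ E' = ExteriorAlgebra.ι Q (g • a) * E)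
    (haE : koszulDifferential φ (ExteriorAlgebra.ι Q a * E) = f • E)
    (hE' : ∃ C D, E' = koszulDifferential φ C + g • D) :
    ∃ C D, E = koszulDifferential φ C + g • D := by
  obtain ⟨C, D, rfl⟩ := hE'
  have hΛ := hfg.exteriorAlgebra (ι := ι)
  obtain ⟨C', hC'⟩ := (hΛ.right (ExteriorAlgebra.ι Q a * E - koszulDifferential φ D)).1 <| by
    rw [map_add, koszulDifferential_koszulDifferential, zero_add, map_smul, map_smul,
      smul_mul_assoc] at hE
    rw [smul_sub, hE, sub_self]
  obtain ⟨D', hD'⟩ := (hΛ.left (E - koszulDifferential φ C')).1 <| by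
    rw [smul_sub, ← map_smul, ← hC', map_sub, koszulDifferential_koszulDifferential, sub_zero, haE,
      sub_self]
  exact ⟨C', D', by rw [← hD', add_sub_cancel]⟩

theorem smul_notMem_koszulBoundaries (hfg : IsExactPairOn f g Q) {I : Ideal Q} (hI : I ≠ ⊤)
    (hφ : ∀ v, φ v ∈ I) (hg : g ∈ I) (ha : φ a = f) : g • a ∉ koszulBoundaries φ := by
  intro hmem
  obtain ⟨E, hE0, hE⟩ := boundsDividedPowers_of_mem_koszulBoundaries hmem
  have haE (n : ℕ) :
      koszulDifferential φ (ExteriorAlgebra.ι Q a * E.coeff n) = f • E.coeff n := by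
    rw [koszulDifferential_ι_mul, ha, sub_eq_self]
    cases n with
    | zero => rw [hE0, koszulDifferential_one, mul_zero]
    | succ n =>
      rw [hE, map_smul, smul_mul_assoc, mul_smul_comm, ← mul_assoc, ExteriorAlgebra.ι_sq_zero,
        zero_mul, smul_zero]
  have hcoeff : ∃ C D, E.coeff 0 = koszulDifferential φ C + g • D :=
    Nat.decreasingInduction
      (motive := fun n _ => ∃ C D, E.coeff n = koszulDifferential φ C + g • D)
      (fun n _ => exists_eq_koszulDifferential_add_smul hfg (hE n) (haE n))
      ⟨0, 0, by simp⟩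
      (Nat.zero_le (E.natDegree + 1))
  obtain ⟨C, D, hCD⟩ := hcoeff
  have hone : (1 : Q) = ExteriorAlgebra.algebraMapInv (koszulDifferential φ C) +
      g * ExteriorAlgebra.algebraMapInv D := by
    simpa [hE0] using congrArg ExteriorAlgebra.algebraMapInv hCD
  refine hI ((Ideal.eq_top_iff_one I).2 ?_)
  rw [hone]
  exact add_mem (algebraMapInv_koszulDifferential_mem φ hφ C) (I.mul_mem_right _ hg)

end NotBoundary

section ResidueCover

open IsLocalRing

/-- The data of a complex `0 → M → Q → 0` with homology `k` in both degrees, generated in degree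
one by `ζ`, and with vanishing Koszul relations `φ u • v - φ v • u`. -/
structure IsResidueCover {Q M : Type*} [CommRing Q] [IsLocalRing Q] [AddCommGroup M] [Module Q M]
    (φ : M →ₗ[Q] Q) (ζ : M) : Prop where
  apply_smul_comm : ∀ u v, φ u • v = φ v • u
  range_eq : LinearMap.range φ = maximalIdeal Q
  ker_eq : LinearMap.ker φ = Submodule.span Q {ζ}
  ne_zero : ζ ≠ 0

variable {Q M : Type*} [CommRing Q] [AddCommGroup M] [Module Q M]

lemma exists_maximal_le_ker_notMem {φ : M →ₗ[Q] Q} {ζ : M} (hζ : ζ ∉ koszulBoundaries φ) :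
    ∃ N, koszulBoundaries φ ≤ N ∧
      Maximal (fun N => N ≤ LinearMap.ker φ ∧ ζ ∉ N) N := by
  refine zorn_le_nonempty₀ {N | N ≤ LinearMap.ker φ ∧ ζ ∉ N} (fun C hC hchain N hN => ?_) _
    ⟨koszulBoundaries_le_ker φ, hζ⟩
  refine ⟨sSup C, ⟨sSup_le fun N hN => (hC hN).1, fun h => ?_⟩, fun N hN => le_sSup hN⟩
  obtain ⟨N', hN', hζN'⟩ := (Submodule.mem_sSup_of_directed ⟨N, hN⟩ hchain.directedOn).1 h
  exact (hC hN').2 hζN'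

variable [IsLocalRing Q]

lemma smul_mem_koszulBoundaries {φ : M →ₗ[Q] Q} (hφ : LinearMap.range φ = maximalIdeal Q)
    {c : Q} (hc : c ∈ maximalIdeal Q) {z : M} (hz : φ z = 0) : c • z ∈ koszulBoundaries φ := by
  obtain ⟨t, rfl⟩ : c ∈ LinearMap.range φ := hφ ▸ hc
  simpa [hz] using sub_mem_koszulBoundaries φ t z

lemma ker_le_sup_span_singleton {φ : M →ₗ[Q] Q} (hφ : LinearMap.range φ = maximalIdeal Q) {ζ : M}
    {N : Submodule Q M} (hN : koszulBoundaries φ ≤ N)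
    (hmax : Maximal (fun N => N ≤ LinearMap.ker φ ∧ ζ ∉ N) N) :
    LinearMap.ker φ ≤ N ⊔ Submodule.span Q {ζ} := by
  intro z hz
  by_cases hzN : z ∈ N
  · exact Submodule.mem_sup_left hzN
  have hmem : ζ ∈ N ⊔ Submodule.span Q {z} := by
    by_contra hmem
    have hle := hmax.2 ⟨sup_le hmax.1.1 ((Submodule.span_singleton_le_iff_mem _ _).2 hz), hmem⟩
      le_sup_left
    exact hzN (hle (Submodule.mem_sup_right (Submodule.mem_span_singleton_self z)))
  obtain ⟨n, hn, _, hc, hnc⟩ := Submodule.mem_sup.1 hmem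
  obtain ⟨c, rfl⟩ := Submodule.mem_span_singleton.1 hc
  have hunit : IsUnit c := by
    by_contra hc
    have hcz : c • z ∈ N := hN (smul_mem_koszulBoundaries hφ hc hz)
    exact hmax.1.2 (hnc ▸ add_mem hn hcz)
  rw [← Submodule.smul_mem_iff_of_isUnit _ hunit, eq_sub_of_add_eq' hnc]
  exact sub_mem (Submodule.mem_sup_right (Submodule.mem_span_singleton_self ζ))
    (Submodule.mem_sup_left hn)

theorem exists_isResidueCover_quotient {φ : M →ₗ[Q] Q} (hφ : LinearMap.range φ = maximalIdeal Q)
    {ζ : M} (hζ : φ ζ = 0) (hζB : ζ ∉ koszulBoundaries φ) :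
    ∃ (N : Submodule Q M) (hN : N ≤ LinearMap.ker φ),
      IsResidueCover (N.liftQ φ hN) (N.mkQ ζ) := by
  obtain ⟨N, hBN, hmax⟩ := exists_maximal_le_ker_notMem hζB
  refine ⟨N, hmax.1.1, fun u v => ?_, by rw [Submodule.range_liftQ, hφ], le_antisymm ?_ ?_,
    mt (Submodule.Quotient.mk_eq_zero N).1 hmax.1.2⟩
  · obtain ⟨u, rfl⟩ := N.mkQ_surjective u
    obtain ⟨v, rfl⟩ := N.mkQ_surjective v
    simp only [Submodule.mkQ_apply, Submodule.liftQ_apply, ← Submodule.Quotient.mk_smul]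
    exact (Submodule.Quotient.eq N).2 (hBN (sub_mem_koszulBoundaries φ u v))
  · rw [Submodule.ker_liftQ, ← Set.image_singleton, ← Submodule.map_span]
    refine (Submodule.map_mono (ker_le_sup_span_singleton hφ hBN hmax)).trans ?_
    rw [Submodule.map_sup, N.mkQ_map_self, bot_sup_eq]
  · simpa [Submodule.span_singleton_le_iff_mem] using hζ

variable (Q) in
/-- The surjection onto the maximal ideal from the free module on its elements. -/
noncomputable def maximalIdealPresentation : (maximalIdeal Q →₀ Q) →ₗ[Q] Q :=
  Finsupp.linearCombination Q Subtype.val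

variable (Q) in
lemma range_maximalIdealPresentation :
    LinearMap.range (maximalIdealPresentation Q) = maximalIdeal Q := by
  rw [maximalIdealPresentation, Finsupp.range_linearCombination, Subtype.range_coe]
  exact Submodule.span_eq (maximalIdeal Q)

theorem IsExactPairOn.exists_isResidueCover {f g : Q} (hfg : IsExactPairOn f g Q)
    (hf : f ∈ maximalIdeal Q) (hg : g ∈ maximalIdeal Q) :
    ∃ (N : Submodule Q (maximalIdeal Q →₀ Q)) (φ : ((maximalIdeal Q →₀ Q) ⧸ N) →ₗ[Q] Q)
      (α : (maximalIdeal Q →₀ Q) ⧸ N),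
      φ α = f ∧ IsResidueCover φ (g • α) := by
  have hrange := range_maximalIdealPresentation Q
  obtain ⟨a, ha⟩ : f ∈ LinearMap.range (maximalIdealPresentation Q) := hrange.symm ▸ hf
  have hga : maximalIdealPresentation Q (g • a) = 0 := by
    rw [map_smul, ha]
    exact (hfg.right f).2 ⟨1, (mul_one f).symm⟩
  obtain ⟨N, hN, hcover⟩ := exists_isResidueCover_quotient hrange hga
    (smul_notMem_koszulBoundaries hfg (maximalIdeal.isMaximal Q).ne_top
      (fun v => hrange.le (LinearMap.mem_range_self _ v)) hg ha)
  exact ⟨N, N.liftQ _ hN, N.mkQ a, by simpa using ha, by rwa [← map_smul]⟩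

namespace IsResidueCover

variable {φ : M →ₗ[Q] Q} {ζ : M}

lemma mem_range_iff (h : IsResidueCover φ ζ) {c : Q} : (∃ v, φ v = c) ↔ c ∈ maximalIdeal Q := by
  rw [← h.range_eq, LinearMap.mem_range]

lemma apply_mem (h : IsResidueCover φ ζ) (v : M) : φ v ∈ maximalIdeal Q :=
  h.mem_range_iff.1 ⟨v, rfl⟩

lemma apply_eq_zero_iff (h : IsResidueCover φ ζ) {z : M} : φ z = 0 ↔ ∃ c : Q, c • ζ = z := by
  rw [← LinearMap.mem_ker, h.ker_eq, Submodule.mem_span_singleton]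

lemma smul_eq_zero_of_apply_eq_zero (h : IsResidueCover φ ζ) {c : Q} (hc : c ∈ maximalIdeal Q)
    {z : M} (hz : φ z = 0) : c • z = 0 := by
  obtain ⟨t, rfl⟩ := h.mem_range_iff.2 hc
  rw [h.apply_smul_comm, hz, zero_smul]

lemma smul_eq_zero_iff (h : IsResidueCover φ ζ) {c : Q} : c • ζ = 0 ↔ c ∈ maximalIdeal Q := by
  refine ⟨fun hc => ?_, fun hc => h.smul_eq_zero_of_apply_eq_zero hc
    (h.apply_eq_zero_iff.2 ⟨1, one_smul _ _⟩)⟩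
  by_contra hunit
  exact h.ne_zero ((IsUnit.smul_eq_zero (not_not.1 hunit)).1 hc)

variable {f g : Q} {α : M}

-- An `α'` with `φ α' = f` differs from `α` by an element of `ker φ`, which `g` kills.
lemma smul_congr (h : IsResidueCover φ (g • α)) (hg : g ∈ maximalIdeal Q) {α' : M}
    (hα : φ α' = φ α) : g • α' = g • α := by
  rw [← sub_eq_zero, ← smul_sub]
  exact h.smul_eq_zero_of_apply_eq_zero hg (by rw [map_sub, hα, sub_self])

lemma exists_eq_smul_of_smul_eq_zero {α γ : M} (h : IsResidueCover φ (φ γ • α))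
    (hfg : IsExactPairOn (φ α) (φ γ) Q) {w : M} (hw : φ α • w = 0) : ∃ v, w = φ γ • v := by
  obtain ⟨c, hc⟩ := (hfg.left (φ w)).1 (by rw [← map_smul, hw, map_zero])
  have hker : φ (w - c • γ) = 0 := by simp [hc, mul_comm]
  have hcζ : c • φ γ • α = 0 := by
    have := h.smul_eq_zero_of_apply_eq_zero (h.apply_mem α) hker
    rwa [smul_sub, hw, zero_sub, neg_eq_zero, smul_comm, h.apply_smul_comm] at this
  obtain ⟨l, hl⟩ := h.apply_eq_zero_iff.1 hker
  obtain ⟨t, rfl⟩ := h.mem_range_iff.2 (h.smul_eq_zero_iff.1 hcζ)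
  refine ⟨t + l • α, ?_⟩
  rw [smul_add, smul_comm, hl, ← h.apply_smul_comm t, add_sub_cancel]

theorem isExactPairOn (h : IsResidueCover φ (g • α)) (hfg : IsExactPairOn f g Q)
    (hg : g ∈ maximalIdeal Q) (hα : φ α = f) : IsExactPairOn f g M := by
  obtain ⟨γ, rfl⟩ := h.mem_range_iff.2 hg
  subst hα
  have hzero : φ α * φ γ = 0 := (hfg.left _).2 ⟨1, (mul_one _).symm⟩
  refine ⟨fun w => ⟨h.exists_eq_smul_of_smul_eq_zero hfg, ?_⟩,
    fun w => ⟨(h.apply_smul_comm γ α ▸ h).exists_eq_smul_of_smul_eq_zero hfg.symm, ?_⟩⟩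
  · rintro ⟨v, rfl⟩
    rw [smul_smul, hzero, zero_smul]
  · rintro ⟨v, rfl⟩
    rw [smul_smul, mul_comm, hzero, zero_smul]

theorem exists_eq_smul_add_smul (h : IsResidueCover φ (g • α)) (hg : g ∈ maximalIdeal Q)
    (hα : φ α = f) {w : M} {c : Q} (hw : φ w = f * c) : ∃ v, w = c • α + f • v := by
  obtain ⟨γ, rfl⟩ := h.mem_range_iff.2 hg
  obtain ⟨l, hl⟩ := h.apply_eq_zero_iff.1 (show φ (w - c • α) = 0 by simp [hw, hα, mul_comm])
  exact ⟨l • γ, by rw [smul_comm, ← hα, h.apply_smul_comm, hl, add_sub_cancel]⟩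

theorem mem_maximalIdeal_of_smul_eq_smul (h : IsResidueCover φ (g • α))
    (hfg : IsExactPairOn f g Q) (hg : g ∈ maximalIdeal Q) (hα : φ α = f) {c : Q} {v : M}
    (hc : c • α = f • v) : c ∈ maximalIdeal Q := by
  obtain ⟨y, hy⟩ := (hfg.left (c - φ v)).1 <| by
    have := congrArg φ hc
    rw [map_smul, map_smul, hα, smul_eq_mul, mul_comm] at this
    rw [smul_sub, smul_eq_mul, this, sub_self]
  rw [eq_add_of_sub_eq hy]
  exact add_mem (Ideal.mul_mem_right _ _ hg) (h.apply_mem v)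

end IsResidueCover

end ResidueCover

/-! ### Splicing free resolutions -/

section Graded

variable {A S : Type*} [CommRing A]

variable (A) in
/-- The degree `n` part of the free module on a graded set. It vanishes for `n < 0`; integral
degrees make room for operators of negative degree. -/
def gradedPiece (deg : S → ℕ) (n : ℤ) : Submodule A (S →₀ A) :=
  Finsupp.supported A A {s | (deg s : ℤ) = n}

variable (A) in
/-- The operators raising degrees by `p`. -/
def homogeneousEnd (deg : S → ℕ) (p : ℤ) : Submodule A (Module.End A (S →₀ A)) where
  carrier := {T | ∀ n, ∀ v ∈ gradedPiece A deg n, T v ∈ gradedPiece A deg (n + p)}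
  add_mem' hT hU n v hv := add_mem (hT n v hv) (hU n v hv)
  zero_mem' _ _ _ := zero_mem _
  smul_mem' c _ hT n v hv := Submodule.smul_mem _ c (hT n v hv)

variable {deg : S → ℕ}

lemma single_mem_gradedPiece {s : S} {n : ℤ} (hs : (deg s : ℤ) = n) (c : A) :
    Finsupp.single s c ∈ gradedPiece A deg n :=
  Finsupp.single_mem_supported A c hs

lemma gradedPiece_le_iff {n : ℤ} {N : Submodule A (S →₀ A)} :
    gradedPiece A deg n ≤ N ↔ ∀ s, (deg s : ℤ) = n → Finsupp.single s 1 ∈ N := by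
  rw [gradedPiece, Finsupp.supported_eq_span_single, Submodule.span_le, Set.image_subset_iff]
  rfl

lemma eq_zero_of_mem_gradedPiece_of_neg {n : ℤ} (hn : n < 0) {v : S →₀ A}
    (hv : v ∈ gradedPiece A deg n) : v = 0 := by
  rw [← Finsupp.support_eq_empty, Finset.eq_empty_iff_forall_notMem]
  intro s hs
  have : (deg s : ℤ) = n := hv hs
  omega

lemma mem_homogeneousEnd_of_single {p : ℤ} {T : Module.End A (S →₀ A)}
    (hT : ∀ s, T (Finsupp.single s 1) ∈ gradedPiece A deg (deg s + p)) :
    T ∈ homogeneousEnd A deg p := by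
  refine fun n => gradedPiece_le_iff (N := (gradedPiece A deg (n + p)).comap T).2 ?_
  rintro s rfl
  exact hT s

lemma apply_mem_gradedPiece {p n m : ℤ} {T : Module.End A (S →₀ A)}
    (hT : T ∈ homogeneousEnd A deg p) {v : S →₀ A} (hv : v ∈ gradedPiece A deg n)
    (hm : n + p = m) : T v ∈ gradedPiece A deg m :=
  hm ▸ hT n v hv

instance : SetLike.GradedMonoid (homogeneousEnd A deg) where
  one_mem n v hv := by simpa using hv
  mul_mem _ _ _ _ hT hU _ _ hv := apply_mem_gradedPiece hT (hU _ _ hv) (by ring)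

end Graded

section SplicedResolution

/-- The complex `⋯ → V₂ → V₁ → V₀` obtained by splicing a free resolution of `M`, placed in degrees
at least one and augmented by `η`, with a linear form `φ : M → Q`. The complex is the free module
on the graded set `S`, and `o` is the generator of `V₀`. -/
structure IsSplicedResolution {Q M S : Type*} [CommRing Q] [AddCommGroup M] [Module Q M]
    (φ : M →ₗ[Q] Q) (deg : S → ℕ) (o : S) (d : Module.End Q (S →₀ Q)) (η : (S →₀ Q) →ₗ[Q] M) :
    Prop where
  d_mem : d ∈ homogeneousEnd Q deg (-1)
  d_d : ∀ v, d (d v) = 0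
  deg_eq_zero_iff : ∀ s, deg s = 0 ↔ s = o
  d_eq_single : ∀ v ∈ gradedPiece Q deg 1, d v = Finsupp.single o (φ (η v))
  exists_η_eq : ∀ x, ∃ v ∈ gradedPiece Q deg 1, η v = x
  η_eq_zero_iff : ∀ v ∈ gradedPiece Q deg 1, η v = 0 ↔ ∃ y ∈ gradedPiece Q deg 2, d y = v
  exact : ∀ n : ℤ, 2 ≤ n → ∀ v ∈ gradedPiece Q deg n, d v = 0 →
    ∃ y ∈ gradedPiece Q deg (n + 1), d y = v

variable {Q : Type u} [CommRing Q]

/-- The `k`-th syzygy of a module, where each module is covered by the free module on all its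
elements. -/
noncomputable def syzygy (M : ModuleCat.{u} Q) : ℕ → ModuleCat.{u} Q
  | 0 => M
  | k + 1 => ModuleCat.of Q
      (LinearMap.ker (Finsupp.linearCombination Q (id : syzygy M k → syzygy M k)))

/-- The generators of the complex spliced from the syzygies of `M`. -/
abbrev SplicedIndex (M : ModuleCat.{u} Q) : Type u := Option (Σ k, syzygy M k)

namespace SplicedIndex

variable (M : ModuleCat.{u} Q)

/-- The degree of a generator. -/
def deg : SplicedIndex M → ℕ
  | none => 0
  | some ⟨k, _⟩ => k + 1

/-- The canonical cover of the `k`-th syzygy. -/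
noncomputable def cover (k : ℕ) : (syzygy M k →₀ Q) →ₗ[Q] syzygy M k :=
  Finsupp.linearCombination Q id

/-- The inclusion of the free cover of the `k`-th syzygy as the part of degree `k + 1`. -/
noncomputable def incl (k : ℕ) : (syzygy M k →₀ Q) →ₗ[Q] (SplicedIndex M →₀ Q) :=
  Finsupp.lmapDomain Q Q fun x => some ⟨k, x⟩

/-- The inclusion of a syzygy in the free module preceding it. -/
noncomputable def syzygySubtype (k : ℕ) : syzygy M (k + 1) →ₗ[Q] (syzygy M k →₀ Q) :=
  (LinearMap.ker (Finsupp.linearCombination Q id)).subtype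

variable {M}

/-- The differential of the spliced complex. -/
noncomputable def differential (φ : syzygy M 0 →ₗ[Q] Q) : Module.End Q (SplicedIndex M →₀ Q) :=
  Finsupp.linearCombination Q fun
    | none => 0
    | some ⟨0, x⟩ => Finsupp.single none (φ x)
    | some ⟨k + 1, x⟩ => incl M k (syzygySubtype M k x)

variable (M) in
/-- The augmentation of the part of positive degree. -/
noncomputable def augmentation : (SplicedIndex M →₀ Q) →ₗ[Q] syzygy M 0 :=
  Finsupp.linearCombination Q fun
    | some ⟨0, x⟩ => x
    | _ => 0

lemma cover_surjective (k : ℕ) : Function.Surjective (cover M k) :=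
  fun x => ⟨Finsupp.single x 1, by simp [cover]⟩

lemma cover_eq_zero_iff {k : ℕ} {w : syzygy M k →₀ Q} :
    cover M k w = 0 ↔ ∃ x, syzygySubtype M k x = w :=
  ⟨fun h => ⟨⟨w, h⟩, rfl⟩, by rintro ⟨x, rfl⟩; exact x.2⟩

lemma incl_injective (k : ℕ) : Function.Injective (incl M k) :=
  Finsupp.mapDomain_injective fun _ _ h => by simpa using h

lemma range_incl (k : ℕ) : LinearMap.range (incl M k) = gradedPiece Q (deg M) (k + 1) := by
  rw [LinearMap.range_eq_map, ← Finsupp.supported_univ, incl, Finsupp.lmapDomain_supported,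
    gradedPiece]
  congr 1
  ext (_ | ⟨l, x⟩)
  · have : ¬ (0 : ℤ) = k + 1 := by omega
    simpa [deg] using this
  · simp only [deg, Set.image_univ, Set.mem_range, Set.mem_ofPred_eq]
    constructor
    · rintro ⟨y, hy⟩
      cases hy
      rfl
    · intro h
      obtain rfl : l = k := by omega
      exact ⟨x, rfl⟩

lemma exists_incl_eq {k : ℕ} {n : ℤ} (hn : n = k + 1) {v : SplicedIndex M →₀ Q}
    (hv : v ∈ gradedPiece Q (deg M) n) : ∃ w, incl M k w = v := by
  rwa [hn, ← range_incl] at hv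

lemma incl_mem {k : ℕ} {n : ℤ} (hn : n = k + 1) (w : syzygy M k →₀ Q) :
    incl M k w ∈ gradedPiece Q (deg M) n := by
  rw [hn, ← range_incl]
  exact LinearMap.mem_range_self _ w

lemma augmentation_incl_zero (w : syzygy M 0 →₀ Q) :
    augmentation M (incl M 0 w) = cover M 0 w := by
  rw [augmentation, incl, Finsupp.lmapDomain_apply, Finsupp.linearCombination_mapDomain]
  rfl

variable (φ : syzygy M 0 →ₗ[Q] Q)

lemma differential_incl_zero (w : syzygy M 0 →₀ Q) :
    differential φ (incl M 0 w) = Finsupp.single none (φ (cover M 0 w)) := by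
  rw [differential, incl, Finsupp.lmapDomain_apply, Finsupp.linearCombination_mapDomain]
  suffices Finsupp.linearCombination Q (fun x => Finsupp.single none (φ x)) =
      Finsupp.lsingle none ∘ₗ φ ∘ₗ cover M 0 from LinearMap.congr_fun this w
  ext x
  simp [cover]

lemma differential_incl_succ (k : ℕ) (w : syzygy M (k + 1) →₀ Q) :
    differential φ (incl M (k + 1) w) = incl M k (syzygySubtype M k (cover M (k + 1) w)) := by
  rw [differential, incl, Finsupp.lmapDomain_apply, Finsupp.linearCombination_mapDomain]
  suffices Finsupp.linearCombination Q (fun x => incl M k (syzygySubtype M k x)) =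
      incl M k ∘ₗ syzygySubtype M k ∘ₗ cover M (k + 1) from LinearMap.congr_fun this w
  ext1 x
  ext1
  simp [cover]

lemma differential_mem_homogeneousEnd : differential φ ∈ homogeneousEnd Q (deg M) (-1) := by
  refine mem_homogeneousEnd_of_single fun s => ?_
  rw [differential, Finsupp.linearCombination_single, one_smul]
  match s with
  | none => exact zero_mem _
  | some ⟨0, x⟩ => exact single_mem_gradedPiece (by simp [deg]) _
  | some ⟨k + 1, x⟩ => exact incl_mem (by simp [deg]) _

lemma differential_differential (v : SplicedIndex M →₀ Q) :
    differential φ (differential φ v) = 0 := by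
  suffices differential φ ∘ₗ differential φ = 0 from LinearMap.congr_fun this v
  ext1 s
  ext1
  have hcover (k : ℕ) (x : syzygy M (k + 1)) : cover M k (syzygySubtype M k x) = 0 :=
    cover_eq_zero_iff.2 ⟨x, rfl⟩
  rw [LinearMap.comp_apply, LinearMap.comp_apply, Finsupp.lsingle_apply]
  conv_lhs => arg 2; rw [differential, Finsupp.linearCombination_single, one_smul]
  match s with
  | none => exact map_zero _
  | some ⟨0, x⟩ => simp [differential]
  | some ⟨1, x⟩ =>
    change differential φ (incl M 0 (syzygySubtype M 0 x)) = 0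
    rw [differential_incl_zero, hcover, map_zero, Finsupp.single_zero]
  | some ⟨k + 2, x⟩ =>
    change differential φ (incl M (k + 1) (syzygySubtype M (k + 1) x)) = 0
    rw [differential_incl_succ, hcover, map_zero, map_zero]

theorem isSplicedResolution :
    IsSplicedResolution φ (deg M) none (differential φ) (augmentation M) where
  d_mem := differential_mem_homogeneousEnd φ
  d_d := differential_differential φ
  deg_eq_zero_iff := by
    rintro (_ | ⟨k, x⟩) <;> simp [deg]
  d_eq_single v hv := by
    obtain ⟨w, rfl⟩ := exists_incl_eq (k := 0) rfl hv
    rw [differential_incl_zero, augmentation_incl_zero]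
  exists_η_eq x := by
    obtain ⟨w, rfl⟩ := cover_surjective (M := M) 0 x
    exact ⟨incl M 0 w, incl_mem rfl w, augmentation_incl_zero w⟩
  η_eq_zero_iff v hv := by
    obtain ⟨w, rfl⟩ := exists_incl_eq (k := 0) rfl hv
    rw [augmentation_incl_zero, cover_eq_zero_iff]
    constructor
    · rintro ⟨x, rfl⟩
      obtain ⟨y, rfl⟩ := cover_surjective 1 x
      exact ⟨incl M 1 y, incl_mem (by norm_num) y, differential_incl_succ φ 0 y⟩
    · rintro ⟨y, hy, hyw⟩
      obtain ⟨y, rfl⟩ := exists_incl_eq (k := 1) (by norm_num) hy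
      exact ⟨_, incl_injective 0 ((differential_incl_succ φ 0 y).symm.trans hyw)⟩
  exact n hn v hv hdv := by
    obtain ⟨k, rfl⟩ : ∃ k : ℕ, n = (k + 1 : ℕ) + 1 := ⟨(n - 2).toNat, by omega⟩
    obtain ⟨w, rfl⟩ := exists_incl_eq rfl hv
    rw [differential_incl_succ, ← map_zero (incl M k), (incl_injective k).eq_iff] at hdv
    have hw : cover M (k + 1) w = 0 := Subtype.val_injective hdv
    obtain ⟨x, rfl⟩ := cover_eq_zero_iff.1 hw
    obtain ⟨y, rfl⟩ := cover_surjective (k + 2) x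
    exact ⟨incl M (k + 2) y, incl_mem (by push_cast; ring) y, differential_incl_succ φ (k + 1) y⟩

end SplicedIndex

theorem exists_isSplicedResolution {M : Type u} [AddCommGroup M] [Module Q M] (φ : M →ₗ[Q] Q) :
    ∃ (S : Type u) (deg : S → ℕ) (o : S) (d : Module.End Q (S →₀ Q)) (η : (S →₀ Q) →ₗ[Q] M),
      IsSplicedResolution φ deg o d η :=
  ⟨_, _, _, _, _, SplicedIndex.isSplicedResolution (M := ModuleCat.of Q M) φ⟩

end SplicedResolution

/-! ### Higher homotopies -/

lemma exists_forall_of_wellFounded {ι V : Type*} [Nonempty V] {r : ι → ι → Prop}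
    (wf : WellFounded r) (P : ι → (ι → V) → V → Prop)
    (hcongr : ∀ i F F' v, (∀ j, r j i → F j = F' j) → P i F v → P i F' v)
    (hstep : ∀ i F, (∀ j, r j i → P j F (F j)) → ∃ v, P i F v) :
    ∃ F : ι → V, ∀ i, P i F (F i) := by
  classical
  let extend (i : ι) (rec : ∀ j, r j i → V) (j : ι) : V :=
    if h : r j i then rec j h else Classical.arbitrary V
  let F : ι → V := wf.fix fun i rec => Classical.epsilon (P i (extend i rec))
  have hF (i : ι) : F i = Classical.epsilon (P i (extend i fun j _ => F j)) :=
    wf.fix_eq _ i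
  have hextend (i j : ι) (h : r j i) : extend i (fun j _ => F j) j = F j := dif_pos h
  refine ⟨F, fun i => ?_⟩
  induction i using wf.induction with | _ i ih
  obtain ⟨v, hv⟩ := hstep i F ih
  refine hcongr i _ F _ (hextend i) ?_
  rw [hF]
  exact Classical.epsilon_spec (p := P i (extend i fun j _ => F j))
    ⟨v, hcongr i F _ v (fun j h => (hextend i j h).symm) hv⟩

section Homotopy

namespace IsSplicedResolution

variable {Q M S : Type*} [CommRing Q] [AddCommGroup M] [Module Q M] {φ : M →ₗ[Q] Q}
  {deg : S → ℕ} {o : S} {d : Module.End Q (S →₀ Q)} {η : (S →₀ Q) →ₗ[Q] M}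

lemma single_mem_zero (C : IsSplicedResolution φ deg o d η) (c : Q) :
    Finsupp.single o c ∈ gradedPiece Q deg 0 :=
  single_mem_gradedPiece (by exact_mod_cast (C.deg_eq_zero_iff o).2 rfl) c

lemma d_eq_zero (C : IsSplicedResolution φ deg o d η) {v : S →₀ Q}
    (hv : v ∈ gradedPiece Q deg 0) : d v = 0 :=
  eq_zero_of_mem_gradedPiece_of_neg (by norm_num) (C.d_mem _ _ hv)

lemma deg_lt_of_mem_support (C : IsSplicedResolution φ deg o d η) {s t : S}
    (ht : t ∈ (d (Finsupp.single s 1)).support) : deg t < deg s := by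
  have : (deg t : ℤ) = deg s + -1 := C.d_mem _ _ (single_mem_gradedPiece rfl 1) ht
  omega

variable {p : ℤ} {Z : Module.End Q (S →₀ Q)}

lemma exists_homotopy_step_of_two_le (C : IsSplicedResolution φ deg o d η) (hp : 0 ≤ p)
    (hZ : Z ∈ homogeneousEnd Q deg p) (hdZ : Commute d Z) {F : S → S →₀ Q} {s : S}
    (hs : 2 ≤ deg s)
    (ih : ∀ s', deg s' < deg s → F s' ∈ gradedPiece Q deg (deg s' + (p + 1)) ∧
      d (F s') + Finsupp.linearCombination Q F (d (Finsupp.single s' 1)) =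
        Z (Finsupp.single s' 1)) :
    ∃ v ∈ gradedPiece Q deg (deg s + (p + 1)),
      d v + Finsupp.linearCombination Q F (d (Finsupp.single s 1)) = Z (Finsupp.single s 1) := by
  have hmem : Finsupp.single s 1 ∈ gradedPiece Q deg (deg s) := single_mem_gradedPiece rfl (1 : Q)
  set L := Finsupp.linearCombination Q F
  have hds := C.d_mem _ _ hmem
  have hL : L (d (Finsupp.single s 1)) ∈ gradedPiece Q deg (deg s + p) := by
    refine gradedPiece_le_iff (N := (gradedPiece Q deg _).comap L) |>.2 (fun s' hs' => ?_) hds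
    have := (ih s' (by omega)).1
    rw [show (deg s' : ℤ) + (p + 1) = deg s + p by omega] at this
    simpa [L] using this
  have hdL : d (L (d (Finsupp.single s 1))) + L (d (d (Finsupp.single s 1))) =
      Z (d (Finsupp.single s 1)) := by
    refine gradedPiece_le_iff (N := LinearMap.eqLocus (d ∘ₗ L + L ∘ₗ d) Z) |>.2
      (fun s' hs' => ?_) hds
    simpa [L] using (ih s' (by omega)).2
  rw [C.d_d, map_zero, add_zero] at hdL
  obtain ⟨v, hv, hdv⟩ := C.exact (deg s + p) (by omega)
    (Z (Finsupp.single s 1) - L (d (Finsupp.single s 1)))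
    (sub_mem (hZ _ _ hmem) hL)
    (by rw [map_sub, hdL, sub_eq_zero]; exact LinearMap.congr_fun hdZ.eq _)
  exact ⟨v, by rwa [← add_assoc], by rw [hdv, sub_add_cancel]⟩

lemma exists_homotopy_step (C : IsSplicedResolution φ deg o d η) (hp : 0 ≤ p)
    (hZ : Z ∈ homogeneousEnd Q deg p) (hdZ : Commute d Z) {t : S →₀ Q}
    (ht : t ∈ gradedPiece Q deg (p + 1)) (hdt : d t = Z (Finsupp.single o 1))
    (h1 : ∀ v ∈ gradedPiece Q deg 1, ∃ y ∈ gradedPiece Q deg (p + 2), d y = Z v - φ (η v) • t)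
    {F : S → S →₀ Q} {s : S}
    (ih : ∀ s', deg s' < deg s → F s' ∈ gradedPiece Q deg (deg s' + (p + 1)) ∧ (s' = o → F s' = t) ∧
      d (F s') + Finsupp.linearCombination Q F (d (Finsupp.single s' 1)) =
        Z (Finsupp.single s' 1)) :
    ∃ v ∈ gradedPiece Q deg (deg s + (p + 1)), (s = o → v = t) ∧
      d v + Finsupp.linearCombination Q F (d (Finsupp.single s 1)) = Z (Finsupp.single s 1) := by
  have hs : Finsupp.single s 1 ∈ gradedPiece Q deg (deg s) := single_mem_gradedPiece rfl (1 : Q)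
  obtain h | h | h : deg s = 0 ∨ deg s = 1 ∨ 2 ≤ deg s := by omega
  · obtain rfl := (C.deg_eq_zero_iff s).1 h
    exact ⟨t, by simpa [h] using ht, fun _ => rfl, by rw [C.d_eq_zero (C.single_mem_zero 1), hdt,
      map_zero, add_zero]⟩
  · rw [h, Nat.cast_one] at hs
    obtain ⟨y, hy, hdy⟩ := h1 _ hs
    refine ⟨y, by rwa [h, show ((1 : ℕ) : ℤ) + (p + 1) = p + 2 by push_cast; ring], ?_, ?_⟩
    · rintro rfl
      simp [(C.deg_eq_zero_iff _).2 rfl] at h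
    · have ho := (C.deg_eq_zero_iff o).2 rfl
      rw [C.d_eq_single _ hs, Finsupp.linearCombination_single, (ih o (by omega)).2.1 rfl, hdy,
        sub_add_cancel]
  · obtain ⟨v, hv, hdv⟩ := C.exists_homotopy_step_of_two_le hp hZ hdZ h fun s' hs' =>
      ⟨(ih s' hs').1, (ih s' hs').2.2⟩
    refine ⟨v, hv, ?_, hdv⟩
    rintro rfl
    simp [(C.deg_eq_zero_iff _).2 rfl] at h

theorem exists_homotopy (C : IsSplicedResolution φ deg o d η) (hp : 0 ≤ p)
    (hZ : Z ∈ homogeneousEnd Q deg p) (hdZ : Commute d Z) {t : S →₀ Q}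
    (ht : t ∈ gradedPiece Q deg (p + 1)) (hdt : d t = Z (Finsupp.single o 1))
    (h1 : ∀ v ∈ gradedPiece Q deg 1, ∃ y ∈ gradedPiece Q deg (p + 2), d y = Z v - φ (η v) • t) :
    ∃ h ∈ homogeneousEnd Q deg (p + 1), d * h + h * d = Z := by
  obtain ⟨F, hF⟩ := exists_forall_of_wellFounded (measure deg).wf
    (fun s F v => v ∈ gradedPiece Q deg (deg s + (p + 1)) ∧ (s = o → v = t) ∧
      d v + Finsupp.linearCombination Q F (d (Finsupp.single s 1)) = Z (Finsupp.single s 1))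
    (fun s F F' v hFF' => by
      suffices Finsupp.linearCombination Q F (d (Finsupp.single s 1)) =
          Finsupp.linearCombination Q F' (d (Finsupp.single s 1)) by rw [this]; exact id
      rw [Finsupp.linearCombination_apply, Finsupp.linearCombination_apply]
      exact Finsupp.sum_congr fun t ht => by rw [hFF' t (C.deg_lt_of_mem_support ht)])
    (fun s F ih => C.exists_homotopy_step hp hZ hdZ ht hdt h1 ih)
  refine ⟨Finsupp.linearCombination Q F, mem_homogeneousEnd_of_single fun s => ?_, ?_⟩
  · simpa using (hF s).1
  · ext1 s
    ext1
    simpa using (hF s).2.2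

theorem exists_homotopy_of_two_le (C : IsSplicedResolution φ deg o d η) (hp : 2 ≤ p)
    (hZ : Z ∈ homogeneousEnd Q deg p) (hdZ : Commute d Z) :
    ∃ h ∈ homogeneousEnd Q deg (p + 1), d * h + h * d = Z := by
  have hdZ' (v : S →₀ Q) : d (Z v) = Z (d v) := LinearMap.congr_fun hdZ.eq v
  obtain ⟨t, ht, hdt⟩ := C.exact p hp (Z (Finsupp.single o 1))
    (apply_mem_gradedPiece hZ (C.single_mem_zero 1) (zero_add p))
    (by rw [hdZ', C.d_eq_zero (C.single_mem_zero 1), map_zero])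
  refine C.exists_homotopy (by omega) hZ hdZ ht hdt fun v hv => ?_
  rw [show p + 2 = p + 1 + 1 by ring]
  refine C.exact (p + 1) (by omega) _
    (sub_mem (apply_mem_gradedPiece hZ hv (add_comm 1 p)) (Submodule.smul_mem _ _ ht)) ?_
  rw [map_sub, hdZ', C.d_eq_single v hv, map_smul, hdt, ← map_smul, Finsupp.smul_single,
    smul_eq_mul, mul_one, sub_self]

theorem exists_homotopy_smul_one (C : IsSplicedResolution φ deg o d η)
    (hφ : ∀ u v, φ u • v = φ v • u) (x : M) :
    ∃ h ∈ homogeneousEnd Q deg 1, d * h + h * d = φ x • 1 := by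
  obtain ⟨t, ht, rfl⟩ := C.exists_η_eq x
  refine C.exists_homotopy (p := 0) le_rfl
    (Submodule.smul_mem _ _ (SetLike.GradedOne.one_mem (A := homogeneousEnd Q deg)))
    ((Commute.one_right d).smul_right _) ht ?_ fun v hv => ?_
  · rw [C.d_eq_single t ht]
    simp
  · refine (C.η_eq_zero_iff _
      (sub_mem (Submodule.smul_mem _ _ hv) (Submodule.smul_mem _ _ ht))).1 ?_
    change η (φ (η t) • v - φ (η v) • t) = 0
    rw [map_sub, map_smul, map_smul, hφ, sub_self]

end IsSplicedResolution

end Homotopy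

section HigherHomotopies

section Obstruction

open MvPowerSeries

variable {ι R : Type*} [Semiring R] {E G : MvPowerSeries ι R} {I : ι →₀ ℕ}

lemma coeff_mul_of_forall_lt_left (hE : ∀ J < I, coeff J E = 0) :
    coeff I (E * G) = coeff I E * coeff 0 G := by
  classical
  rw [coeff_mul, Finset.sum_eq_single (I, 0)]
  · rintro ⟨J, K⟩ hJK hne
    obtain rfl := Finset.HasAntidiagonal.mem_antidiagonal.1 hJK
    rw [hE, zero_mul]
    exact lt_of_le_of_ne le_self_add fun h => hne (by simp_all)
  · simp

lemma coeff_mul_of_forall_lt_right (hE : ∀ J < I, coeff J E = 0) :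
    coeff I (G * E) = coeff 0 G * coeff I E := by
  classical
  rw [coeff_mul, Finset.sum_eq_single (0, I)]
  · rintro ⟨J, K⟩ hJK hne
    obtain rfl := Finset.HasAntidiagonal.mem_antidiagonal.1 hJK
    rw [hE, mul_zero]
    exact lt_of_le_of_ne le_add_self fun h => hne (by simp_all)
  · simp

lemma commute_coeff_of_forall_lt (hcomm : Commute G E) (hE : ∀ J < I, coeff J E = 0) :
    Commute (coeff 0 G) (coeff I E) := by
  rw [commute_iff_eq, ← coeff_mul_of_forall_lt_right hE, ← coeff_mul_of_forall_lt_left hE, hcomm.eq]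

lemma coeff_add_monomial_mul_self (hI : I ≠ 0) (h : R) :
    coeff I ((G + monomial I h) * (G + monomial I h)) =
      coeff I (G * G) + (coeff 0 G * h + h * coeff 0 G) := by
  classical
  have hleft : coeff I (monomial I h * G) = h * coeff 0 G := by
    simpa using coeff_add_monomial_mul I 0 G h
  have hright : coeff I (G * monomial I h) = coeff 0 G * h := by
    simpa using coeff_add_mul_monomial 0 I G h
  have hsq : coeff I (monomial I h * monomial I h) = 0 := by
    simp [coeff_mul_monomial, coeff_monomial, hI.symm]
  rw [mul_add, add_mul, add_mul, map_add, map_add, map_add, hleft, hright, hsq, add_zero, add_assoc,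
    add_comm (h * _)]

lemma coeff_mul_self_of_degree_eq_one (hI : I.degree = 1) (hGI : coeff I G = 0) :
    coeff I (G * G) = 0 := by
  classical
  rw [coeff_mul]
  refine Finset.sum_eq_zero fun ⟨J, K⟩ hJK => ?_
  obtain rfl := Finset.HasAntidiagonal.mem_antidiagonal.1 hJK
  obtain h | h : J.degree = 0 ∨ K.degree = 0 := by
    simp only [map_add] at hI
    omega
  · obtain rfl := (Finsupp.degree_eq_zero_iff J).1 h
    rw [zero_add] at hGI
    rw [hGI, mul_zero]
  · obtain rfl := (Finsupp.degree_eq_zero_iff K).1 h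
    rw [add_zero] at hGI
    rw [hGI, zero_mul]

lemma coeff_mul_self_congr {G' : MvPowerSeries ι R} (h : ∀ J ≤ I, coeff J G = coeff J G') :
    coeff I (G * G) = coeff I (G' * G') := by
  classical
  rw [coeff_mul, coeff_mul]
  refine Finset.sum_congr rfl fun ⟨J, K⟩ hJK => ?_
  obtain rfl := Finset.HasAntidiagonal.mem_antidiagonal.1 hJK
  rw [h J le_self_add, h K le_add_self]

lemma commute_coeff_sub {R : Type*} [Ring R] {G w : MvPowerSeries ι R} {I : ι →₀ ℕ}
    (hw : Commute G w) (hG : ∀ J < I, coeff J (G * G) = coeff J w) :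
    Commute (coeff 0 G) (coeff I w - coeff I (G * G)) := by
  rw [← map_sub]
  refine commute_coeff_of_forall_lt (hw.sub_right ((Commute.refl G).mul_right (Commute.refl G))) ?_
  exact fun J hJ => by rw [map_sub, hG J hJ, sub_self]

variable {Q : Type*} [CommSemiring Q] [Algebra Q R] [Fintype ι] (c : ι → Q)

lemma commute_sum_smul_X : Commute G (∑ i, c i • X i) :=
  Commute.sum_right _ _ _ fun i _ => (commute_X G i).smul_right _

lemma coeff_sum_smul_X [DecidableEq ι] :
    coeff I (∑ i, c i • X i : MvPowerSeries ι R) =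
      ∑ i, if I = Finsupp.single i 1 then c i • 1 else 0 := by
  rw [map_sum]
  refine Finset.sum_congr rfl fun i _ => ?_
  change c i • coeff I (X i : MvPowerSeries ι R) = _
  rw [coeff_X, smul_ite, smul_zero]

lemma coeff_single_sum_smul_X (i : ι) :
    coeff (Finsupp.single i 1) (∑ i, c i • X i : MvPowerSeries ι R) = c i • 1 := by
  classical
  rw [coeff_sum_smul_X]
  simp [Finsupp.single_left_inj]

lemma coeff_sum_smul_X_of_degree_ne_one (hI : I.degree ≠ 1) :
    coeff I (∑ i, c i • X i : MvPowerSeries ι R) = 0 := by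
  classical
  rw [coeff_sum_smul_X]
  refine Finset.sum_eq_zero fun i _ => if_neg ?_
  rintro rfl
  exact hI (Finsupp.degree_single i 1)

end Obstruction

open MvPowerSeries

variable {Q R ι : Type*} [CommRing Q] [Ring R] [Algebra Q R] {H : ℤ → Submodule Q R} {d : R}

lemma coeff_mul_self_mem [SetLike.GradedMonoid H] {G : MvPowerSeries ι R} {I : ι →₀ ℕ}
    (hG : ∀ J ≤ I, coeff J G ∈ H (2 * J.degree - 1)) :
    coeff I (G * G) ∈ H (2 * I.degree - 2) := by
  classical
  rw [coeff_mul]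
  refine sum_mem fun ⟨J, K⟩ hJK => ?_
  obtain rfl := Finset.HasAntidiagonal.mem_antidiagonal.1 hJK
  convert SetLike.mul_mem_graded (hG J le_self_add) (hG K le_add_self) using 2
  push_cast [map_add]
  ring

variable [Fintype ι] {c : ι → Q}

variable (H d c) in
/-- The conditions on the coefficient of index `I` of a system `G` of higher homotopies for the
scalars `c`, which is a square root of `∑ i, c i • X i` with constant term `d`. -/
structure IsHigherHomotopyAt (G : MvPowerSeries ι R) (I : ι →₀ ℕ) : Prop where
  coeff_mem : coeff I G ∈ H (2 * I.degree - 1)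
  coeff_eq : I = 0 → coeff I G = d
  coeff_mul_self : coeff I (G * G) = coeff I (∑ i, c i • X i)

namespace IsHigherHomotopyAt

lemma congr {G G' : MvPowerSeries ι R} {I : ι →₀ ℕ} (h : IsHigherHomotopyAt H d c G I)
    (hGG' : ∀ J ≤ I, coeff J G = coeff J G') : IsHigherHomotopyAt H d c G' I where
  coeff_mem := hGG' I le_rfl ▸ h.coeff_mem
  coeff_eq hI := hGG' I le_rfl ▸ h.coeff_eq hI
  coeff_mul_self := coeff_mul_self_congr hGG' ▸ h.coeff_mul_self

lemma monomial_zero (hd : d ∈ H (-1)) (hdd : d * d = 0) :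
    IsHigherHomotopyAt H d c (monomial 0 d) 0 where
  coeff_mem := by simpa using hd
  coeff_eq _ := coeff_monomial_same 0 d
  coeff_mul_self := by
    rw [monomial_mul_monomial, hdd, map_zero, map_zero,
      coeff_sum_smul_X_of_degree_ne_one c (by simp)]

variable [SetLike.GradedMonoid H]

lemma exists_add_monomial (hc : ∀ i, ∃ h ∈ H 1, d * h + h * d = c i • 1)
    (hex : ∀ p : ℤ, 2 ≤ p → ∀ Z ∈ H p, Commute d Z → ∃ h ∈ H (p + 1), d * h + h * d = Z)
    {G : MvPowerSeries ι R} {I : ι →₀ ℕ} (hI : I ≠ 0) (hGI : coeff I G = 0)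
    (hG : ∀ J < I, IsHigherHomotopyAt H d c G J) :
    ∃ h, IsHigherHomotopyAt H d c (G + monomial I h) I := by
  have hcomm := commute_coeff_sub (commute_sum_smul_X c) fun J hJ => (hG J hJ).coeff_mul_self
  have hG0 : coeff 0 G = d := (hG 0 (pos_iff_ne_zero.2 hI)).coeff_eq rfl
  rw [hG0] at hcomm
  suffices ∃ h ∈ H (2 * I.degree - 1),
      d * h + h * d = coeff I (∑ i, c i • X i) - coeff I (G * G) by
    obtain ⟨h, hh, hdh⟩ := this
    exact ⟨h, by simpa [hGI] using hh, fun h => absurd h hI,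
      by rw [coeff_add_monomial_mul_self hI, hG0, hdh, add_sub_cancel]⟩
  by_cases hdeg : I.degree = 1
  · obtain ⟨i, rfl⟩ : I ∈ Set.range fun i => Finsupp.single i 1 := by
      rwa [Finsupp.range_single_one]
    rw [coeff_single_sum_smul_X, coeff_mul_self_of_degree_eq_one hdeg hGI, sub_zero, hdeg]
    exact hc i
  · have hpos : I.degree ≠ 0 := mt (Finsupp.degree_eq_zero_iff I).1 hI
    have hmem (J : ι →₀ ℕ) (hJ : J ≤ I) : coeff J G ∈ H (2 * J.degree - 1) := by
      obtain rfl | hJ := hJ.eq_or_lt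
      · exact hGI ▸ zero_mem _
      · exact (hG J hJ).coeff_mem
    rw [coeff_sum_smul_X_of_degree_ne_one c hdeg, zero_sub] at hcomm ⊢
    obtain ⟨h, hh, hdh⟩ := hex (2 * I.degree - 2) (by omega) _
      (neg_mem (coeff_mul_self_mem hmem)) hcomm
    exact ⟨h, by convert hh using 2; ring, hdh⟩

end IsHigherHomotopyAt

theorem exists_higherHomotopies [SetLike.GradedMonoid H] (hd : d ∈ H (-1)) (hdd : d * d = 0)
    (hc : ∀ i, ∃ h ∈ H 1, d * h + h * d = c i • 1)
    (hex : ∀ p : ℤ, 2 ≤ p → ∀ Z ∈ H p, Commute d Z → ∃ h ∈ H (p + 1), d * h + h * d = Z) :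
    ∃ σ : MvPowerSeries ι R, ∀ I, IsHigherHomotopyAt H d c σ I := by
  classical
  let series (F : (ι →₀ ℕ) → R) : MvPowerSeries ι R := F
  have hcoeff (F : (ι →₀ ℕ) → R) (J : ι →₀ ℕ) : coeff J (series F) = F J := rfl
  obtain ⟨F, hF⟩ := exists_forall_of_wellFounded (wellFounded_lt (α := ι →₀ ℕ))
    (fun I F v => IsHigherHomotopyAt H d c (series (Function.update F I v)) I)
    (fun I F F' v hFF' h => h.congr fun J hJ => by
      obtain rfl | hJ := hJ.eq_or_lt
      · simp [hcoeff]
      · simp [hcoeff, hFF' J hJ, hJ.ne])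
    (fun I F ih => by
      simp only [Function.update_eq_self] at ih
      suffices ∃ h, IsHigherHomotopyAt H d c (series (Function.update F I 0) + monomial I h) I by
        obtain ⟨h, hh⟩ := this
        refine ⟨h, hh.congr fun J hJ => ?_⟩
        obtain rfl | hne := eq_or_ne J I
        · simp [hcoeff]
        · simp [hcoeff, coeff_monomial, hne]
      obtain rfl | hI := eq_or_ne I 0
      · exact ⟨d, (IsHigherHomotopyAt.monomial_zero hd hdd).congr fun J hJ => by
          obtain rfl := le_zero_iff.1 hJ
          rw [map_add, hcoeff, Function.update_self, zero_add]⟩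
      · exact IsHigherHomotopyAt.exists_add_monomial hc hex hI (by simp [hcoeff])
          fun J hJ => (ih J hJ).congr fun K hK => by simp [hcoeff, (hK.trans_lt hJ).ne])
  simp only [Function.update_eq_self] at hF
  exact ⟨series F, hF⟩

end HigherHomotopies

section Specialization

open Finset.HasAntidiagonal (antidiagonal mem_antidiagonal)

variable {Q R ι : Type*} [CommRing Q] [Ring R] [Algebra Q R] [Fintype ι] [DecidableEq ι]

lemma sum_antidiagonal_finsuppAntidiag {N : Type*} [AddCommMonoid N] (n : ℕ)
    (F : (ι →₀ ℕ) → (ι →₀ ℕ) → N) :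
    ∑ p ∈ antidiagonal n, ∑ I ∈ Finset.univ.finsuppAntidiag p.1,
        ∑ J ∈ Finset.univ.finsuppAntidiag p.2, F I J =
      ∑ K ∈ Finset.univ.finsuppAntidiag n, ∑ p ∈ antidiagonal K, F p.1 p.2 := by
  simp_rw [← Finset.sum_product', Finset.sum_sigma']
  refine Finset.sum_bij' (fun x _ => ⟨x.2.1 + x.2.2, x.2⟩)
    (fun x _ => ⟨(x.2.1.degree, x.2.2.degree), x.2⟩) ?_ ?_ ?_ ?_ fun _ _ => rfl
  · simp +contextual [Finset.mem_finsuppAntidiag, Finset.sum_add_distrib]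
  · rintro ⟨K, I, J⟩ h
    obtain ⟨hK, rfl⟩ : K.degree = n ∧ I + J = K := by
      simpa [Finset.mem_finsuppAntidiag, Finsupp.degree_eq_sum] using h
    rw [map_add] at hK
    simpa [Finset.mem_finsuppAntidiag, Finsupp.degree_eq_sum] using hK
  · simp +contextual [Finset.mem_finsuppAntidiag, Finsupp.degree_eq_sum]
  · simp +contextual

/-- The image of a power series in several variables under the substitution `X i ↦ b i • X`. -/
noncomputable def specialize (b : ι → Q) (G : MvPowerSeries ι R) : PowerSeries R :=
  PowerSeries.mk fun n => ∑ I ∈ Finset.univ.finsuppAntidiag n,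
    (∏ i, b i ^ I i) • MvPowerSeries.coeff I G

lemma coeff_specialize_mul (b : ι → Q) (G G' : MvPowerSeries ι R) (n : ℕ) :
    PowerSeries.coeff n (specialize b G * specialize b G') =
      PowerSeries.coeff n (specialize b (G * G')) := by
  simp only [specialize, PowerSeries.coeff_mul, PowerSeries.coeff_mk, MvPowerSeries.coeff_mul,
    Finset.sum_mul_sum, Finset.smul_sum]
  rw [sum_antidiagonal_finsuppAntidiag]
  refine Finset.sum_congr rfl fun K _ => Finset.sum_congr rfl fun ⟨I, J⟩ hp => ?_
  obtain rfl := mem_antidiagonal.1 hp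
  simp only [Finsupp.add_apply, pow_add, Finset.prod_mul_distrib, smul_mul_smul_comm]

lemma coeff_specialize_sum_smul_X (b c : ι → Q) (n : ℕ) :
    PowerSeries.coeff n (specialize b (∑ i, c i • MvPowerSeries.X i : MvPowerSeries ι R)) =
      if n = 1 then (∑ i, b i * c i) • (1 : R) else 0 := by
  simp only [specialize, PowerSeries.coeff_mk, coeff_sum_smul_X, Finset.smul_sum]
  rw [Finset.sum_comm]
  have hmem (i : ι) : Finsupp.single i 1 ∈ Finset.univ.finsuppAntidiag n ↔ n = 1 := by
    simp [Finset.mem_finsuppAntidiag, Finsupp.single_apply, eq_comm]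
  simp only [smul_ite, smul_zero, Finset.sum_ite_eq', hmem]
  split_ifs
  · rw [Finset.sum_smul]
    refine Finset.sum_congr rfl fun i _ => ?_
    rw [smul_smul, Finset.prod_eq_single i (by simp +contextual [eq_comm])
      (by simp), Finsupp.single_eq_same, pow_one]
  · exact Finset.sum_const_zero

lemma coeff_specialize_mem_smul {I : Ideal Q} {b : ι → Q} (hb : ∀ i, b i ∈ I) {n : ℕ}
    (hn : n ≠ 0) (G : MvPowerSeries ι R) :
    PowerSeries.coeff n (specialize b G) ∈ I • (⊤ : Submodule Q R) := by
  rw [specialize, PowerSeries.coeff_mk]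
  refine sum_mem fun J hJ => Submodule.smul_mem_smul ?_ Submodule.mem_top
  obtain ⟨i, hi⟩ : ∃ i, J i ≠ 0 := by
    by_contra! h
    simp [Finset.mem_finsuppAntidiag, h, hn.symm] at hJ
  rw [← Finset.mul_prod_erase _ _ (Finset.mem_univ i)]
  exact I.mul_mem_right _ (I.pow_mem_of_mem (hb i) _ (Nat.pos_of_ne_zero hi))

end Specialization

section SquareRoot

variable {Q : Type*} [CommRing Q] {I : Ideal Q} {f : Q}

lemma exists_sum_mul_of_mem_sq (hf : f ∈ I ^ 2) :
    ∃ (s : Finset I) (b c : s → Q), (∀ i, b i ∈ I) ∧ (∀ i, c i ∈ I) ∧ ∑ i, b i * c i = f := by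
  have hf' : f ∈ I • Submodule.span Q (id '' (I : Set Q)) := by
    rwa [Set.image_id, Submodule.span_eq, smul_eq_mul, ← pow_two]
  obtain ⟨a, ha, rfl⟩ := (Submodule.mem_ideal_smul_span_iff_exists_sum' I (I : Set Q) id f).1 hf'
  exact ⟨a.support, fun i => a i, fun i => i.1, fun i => ha i, fun i => i.1.2,
    Finset.sum_coe_sort a.support fun i => a i * (i : Q)⟩

variable {R : Type*} [Ring R] [Algebra Q R] {H : ℤ → Submodule Q R} {d : R}
  [SetLike.GradedMonoid H]

variable (H f) in
/-- A system of higher homotopies for `f`: a square root of `f • X` with homogeneous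
coefficients. -/
structure IsHomotopySystem (τ : PowerSeries R) : Prop where
  coeff_mem : ∀ n : ℕ, PowerSeries.coeff n τ ∈ H (2 * n - 1)
  coeff_mul_self : ∀ n, PowerSeries.coeff n (τ * τ) = if n = 1 then f • 1 else 0

theorem exists_isHomotopySystem (hf : f ∈ I ^ 2) (hd : d ∈ H (-1)) (hdd : d * d = 0)
    (hc : ∀ c ∈ I, ∃ h ∈ H 1, d * h + h * d = c • 1)
    (hex : ∀ p : ℤ, 2 ≤ p → ∀ Z ∈ H p, Commute d Z → ∃ h ∈ H (p + 1), d * h + h * d = Z) :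
    ∃ τ : PowerSeries R, IsHomotopySystem f H τ ∧ PowerSeries.coeff 0 τ = d ∧
      ∀ n ≠ 0, PowerSeries.coeff n τ ∈ I • (⊤ : Submodule Q R) := by
  classical
  obtain ⟨s, b, c, hb, hcI, rfl⟩ := exists_sum_mul_of_mem_sq hf
  obtain ⟨σ, hσ⟩ := exists_higherHomotopies hd hdd (fun i => hc (c i) (hcI i)) hex
  refine ⟨specialize b σ, ⟨fun n => ?_, fun n => ?_⟩, ?_,
    fun n hn => coeff_specialize_mem_smul hb hn σ⟩
  · rw [specialize, PowerSeries.coeff_mk]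
    refine sum_mem fun J hJ => Submodule.smul_mem _ _ ?_
    obtain rfl : J.degree = n := by
      rw [Finsupp.degree_eq_sum]
      exact (Finset.mem_finsuppAntidiag.1 hJ).1
    exact (hσ J).coeff_mem
  · rw [coeff_specialize_mul, ← coeff_specialize_sum_smul_X]
    simp only [specialize, PowerSeries.coeff_mk, (hσ _).coeff_mul_self]
  · simpa [specialize] using (hσ 0).coeff_eq rfl

end SquareRoot

/-! ### Twisted differentials on divided powers -/

section TotalEnd

open Finset.HasAntidiagonal (antidiagonal mem_antidiagonal)

variable {Q S : Type*} [CommRing Q]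

variable (Q S) in
/-- The inclusion of the free module on `S` as the `j`-th layer of the free module on `ℕ × S`, that
is, as its tensor product with the `j`-th divided power of a variable. -/
noncomputable def layer (j : ℕ) : (S →₀ Q) →ₗ[Q] (ℕ × S →₀ Q) :=
  Finsupp.lmapDomain Q Q (Prod.mk j)

lemma layer_single (j : ℕ) (s : S) (c : Q) :
    layer Q S j (Finsupp.single s c) = Finsupp.single (j, s) c :=
  Finsupp.mapDomain_single

lemma layer_apply (j l : ℕ) (v : S →₀ Q) (s : S) :
    layer Q S j v (l, s) = if l = j then v s else 0 := by
  obtain rfl | h := eq_or_ne l j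
  · rw [if_pos rfl]
    exact Finsupp.mapDomain_apply (Prod.mk_right_injective l) v s
  · rw [if_neg h]
    refine Finsupp.mapDomain_of_notMem_range _ _ ?_
    rintro ⟨t, ht⟩
    exact h (congrArg Prod.fst ht).symm

lemma linearMap_ext_layer {N : Type*} [AddCommMonoid N] [Module Q N]
    {T U : (ℕ × S →₀ Q) →ₗ[Q] N} (h : ∀ j v, T (layer Q S j v) = U (layer Q S j v)) : T = U := by
  ext x
  simpa [layer_single] using h x.1 (Finsupp.single x.2 1)

variable (Q S) in
/-- The component in the `0`-th layer. -/
noncomputable def bottom : (ℕ × S →₀ Q) →ₗ[Q] (S →₀ Q) :=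
  Finsupp.lcomapDomain (Prod.mk 0) (Prod.mk_right_injective 0)

lemma succ_map_injective : Function.Injective (Prod.map Nat.succ id : ℕ × S → ℕ × S) :=
  Nat.succ_injective.prodMap Function.injective_id

variable (Q S) in
/-- The operator moving each layer up by one. -/
noncomputable def raise : Module.End Q (ℕ × S →₀ Q) :=
  Finsupp.lmapDomain Q Q (Prod.map Nat.succ id)

variable (Q S) in
/-- The operator moving each layer down by one and annihilating the `0`-th layer. -/
noncomputable def lower : Module.End Q (ℕ × S →₀ Q) :=
  Finsupp.lcomapDomain (Prod.map Nat.succ id) succ_map_injective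

lemma raise_layer (j : ℕ) (v : S →₀ Q) : raise Q S (layer Q S j v) = layer Q S (j + 1) v :=
  (Finsupp.mapDomain_comp (f := Prod.mk j) (g := Prod.map Nat.succ id)).symm

lemma lower_raise (u : ℕ × S →₀ Q) : lower Q S (raise Q S u) = u :=
  Finsupp.comapDomain_mapDomain _ succ_map_injective u

lemma lower_layer_zero (v : S →₀ Q) : lower Q S (layer Q S 0 v) = 0 := by
  ext ⟨l, s⟩
  exact (layer_apply 0 (l + 1) v s).trans (if_neg l.succ_ne_zero)

lemma lower_layer_succ (j : ℕ) (v : S →₀ Q) : lower Q S (layer Q S (j + 1) v) = layer Q S j v := by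
  rw [← raise_layer, lower_raise]

lemma bottom_layer_zero (v : S →₀ Q) : bottom Q S (layer Q S 0 v) = v :=
  Finsupp.comapDomain_mapDomain _ (Prod.mk_right_injective 0) v

lemma layer_bottom_add_raise_lower (u : ℕ × S →₀ Q) :
    layer Q S 0 (bottom Q S u) + raise Q S (lower Q S u) = u := by
  suffices layer Q S 0 ∘ₗ bottom Q S + raise Q S ∘ₗ lower Q S = LinearMap.id from
    LinearMap.congr_fun this u
  refine linearMap_ext_layer fun j v => ?_
  obtain _ | j := j
  · simp [lower_layer_zero, bottom_layer_zero]
  · have : bottom Q S (layer Q S (j + 1) v) = 0 := by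
      ext s
      exact layer_apply (j + 1) 0 v s
    simp [this, lower_layer_succ, raise_layer]

/-- The action of a power series `∑ τ i X ^ i` of operators on the tensor product of the free module
on `S` with the divided power module on one variable: `X` acts on the latter by lowering divided
powers, that is, as `lower`. -/
noncomputable def totalEnd (τ : PowerSeries (Module.End Q (S →₀ Q))) :
    Module.End Q (ℕ × S →₀ Q) :=
  Finsupp.linearCombination Q fun x => ∑ p ∈ antidiagonal x.1,
    layer Q S p.2 (PowerSeries.coeff p.1 τ (Finsupp.single x.2 1))

variable (τ τ' : PowerSeries (Module.End Q (S →₀ Q)))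

lemma totalEnd_layer (j : ℕ) (v : S →₀ Q) :
    totalEnd τ (layer Q S j v) =
      ∑ p ∈ antidiagonal j, layer Q S p.2 (PowerSeries.coeff p.1 τ v) := by
  suffices totalEnd τ ∘ₗ layer Q S j =
      ∑ p ∈ antidiagonal j, layer Q S p.2 ∘ₗ PowerSeries.coeff p.1 τ by
    simpa using LinearMap.congr_fun this v
  ext1 s
  ext1
  simp [layer_single, totalEnd]

lemma totalEnd_layer_zero (v : S →₀ Q) :
    totalEnd τ (layer Q S 0 v) = layer Q S 0 (PowerSeries.coeff 0 τ v) := by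
  simp [totalEnd_layer]

lemma totalEnd_layer_one (v : S →₀ Q) :
    totalEnd τ (layer Q S 1 v) =
      layer Q S 1 (PowerSeries.coeff 0 τ v) + layer Q S 0 (PowerSeries.coeff 1 τ v) := by
  simp [totalEnd_layer, Finset.Nat.antidiagonal_succ]

lemma lower_totalEnd (u : ℕ × S →₀ Q) :
    lower Q S (totalEnd τ u) = totalEnd τ (lower Q S u) := by
  suffices lower Q S ∘ₗ totalEnd τ = totalEnd τ ∘ₗ lower Q S from LinearMap.congr_fun this u
  refine linearMap_ext_layer fun j v => ?_
  obtain _ | j := j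
  · simp [totalEnd_layer_zero, lower_layer_zero]
  · simp [totalEnd_layer, lower_layer_succ, lower_layer_zero, Finset.Nat.antidiagonal_succ']

lemma totalEnd_mul : totalEnd (τ * τ') = totalEnd τ * totalEnd τ' := by
  refine linearMap_ext_layer fun j v => ?_
  simp only [Module.End.mul_apply, totalEnd_layer, map_sum, PowerSeries.coeff_mul,
    LinearMap.sum_apply, Finset.sum_sigma']
  refine Finset.sum_nbij' (fun x => ⟨(x.2.2, x.2.1 + x.1.2), (x.2.1, x.1.2)⟩)
    (fun x => ⟨(x.2.1 + x.1.1, x.2.2), (x.2.1, x.1.1)⟩) ?_ ?_ ?_ ?_ (by simp)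
  all_goals
    simp only [Finset.mem_sigma, mem_antidiagonal]
    grind

end TotalEnd

section TotalDegree

open Finset.HasAntidiagonal (antidiagonal mem_antidiagonal)

variable {Q S : Type*} [CommRing Q] {deg : S → ℕ}

lemma lmapDomain_mem_gradedPiece {T : Type*} {deg' : T → ℕ} {F : S → T} {p n : ℤ}
    (hF : ∀ s, (deg' (F s) : ℤ) = deg s + p) {v : S →₀ Q} (hv : v ∈ gradedPiece Q deg n) :
    Finsupp.lmapDomain Q Q F v ∈ gradedPiece Q deg' (n + p) := by
  classical
  intro t ht
  obtain ⟨s, hs, rfl⟩ := Finset.mem_image.1 (Finsupp.mapDomain_support ht)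
  have : (deg s : ℤ) = n := hv hs
  simp [hF, this]

lemma lcomapDomain_mem_gradedPiece {T : Type*} {deg' : T → ℕ} {F : S → T}
    (hinj : Function.Injective F) {p n : ℤ} (hF : ∀ s, (deg' (F s) : ℤ) = deg s + p) {v : T →₀ Q}
    (hv : v ∈ gradedPiece Q deg' (n + p)) :
    Finsupp.lcomapDomain (R := Q) F hinj v ∈ gradedPiece Q deg n := by
  intro s hs
  have : (deg' (F s) : ℤ) = n + p := hv (by simpa using hs)
  rw [hF] at this
  exact add_right_cancel this

/-- The degree on `ℕ × S` for which the `j`-th divided power of the variable has degree `2 * j`. -/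
def totalDeg (deg : S → ℕ) (x : ℕ × S) : ℕ := deg x.2 + 2 * x.1

variable {n : ℤ}

lemma layer_mem_gradedPiece (j : ℕ) {v : S →₀ Q} (hv : v ∈ gradedPiece Q deg n) :
    layer Q S j v ∈ gradedPiece Q (totalDeg deg) (n + 2 * j) :=
  lmapDomain_mem_gradedPiece (fun s => by simp [totalDeg]) hv

lemma layer_zero_mem_gradedPiece {v : S →₀ Q} (hv : v ∈ gradedPiece Q deg n) :
    layer Q S 0 v ∈ gradedPiece Q (totalDeg deg) n := by
  simpa using layer_mem_gradedPiece 0 hv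

lemma bottom_mem_gradedPiece {u : ℕ × S →₀ Q} (hu : u ∈ gradedPiece Q (totalDeg deg) n) :
    bottom Q S u ∈ gradedPiece Q deg n :=
  lcomapDomain_mem_gradedPiece (deg' := totalDeg deg) _ (p := 0) (by simp [totalDeg])
    (by simpa using hu)

lemma raise_mem_gradedPiece {u : ℕ × S →₀ Q} (hu : u ∈ gradedPiece Q (totalDeg deg) n) :
    raise Q S u ∈ gradedPiece Q (totalDeg deg) (n + 2) :=
  lmapDomain_mem_gradedPiece (fun s => by simp [totalDeg, mul_add, add_assoc]) hu

lemma lower_mem_gradedPiece {u : ℕ × S →₀ Q} (hu : u ∈ gradedPiece Q (totalDeg deg) (n + 2)) :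
    lower Q S u ∈ gradedPiece Q (totalDeg deg) n :=
  lcomapDomain_mem_gradedPiece _ (fun s => by simp [totalDeg, mul_add, add_assoc]) hu

lemma lower_eq_zero_of_mem_gradedPiece (hn : n < 2) {u : ℕ × S →₀ Q}
    (hu : u ∈ gradedPiece Q (totalDeg deg) n) : lower Q S u = 0 :=
  eq_zero_of_mem_gradedPiece_of_neg (n := n - 2) (by omega)
    (lower_mem_gradedPiece (by simpa using hu))

lemma totalEnd_mem {τ : PowerSeries (Module.End Q (S →₀ Q))}
    (hτ : ∀ n : ℕ, PowerSeries.coeff n τ ∈ homogeneousEnd Q deg (2 * n - 1)) :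
    totalEnd τ ∈ homogeneousEnd Q (totalDeg deg) (-1) := by
  refine mem_homogeneousEnd_of_single fun ⟨j, s⟩ => ?_
  rw [← layer_single, totalEnd_layer]
  refine sum_mem fun ⟨i, l⟩ hp => ?_
  obtain rfl := mem_antidiagonal.1 hp
  convert layer_mem_gradedPiece l (hτ i _ _ (single_mem_gradedPiece rfl 1)) using 2
  simp only [totalDeg]
  push_cast
  ring

lemma eq_layer_bottom (hn : n < 2) {u : ℕ × S →₀ Q}
    (hu : u ∈ gradedPiece Q (totalDeg deg) n) : layer Q S 0 (bottom Q S u) = u := by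
  simpa [lower_eq_zero_of_mem_gradedPiece hn hu] using layer_bottom_add_raise_lower u

end TotalDegree

section ResolutionMod

variable {Q S : Type*} [CommRing Q]

/-- An operator `D` on the free module on a graded set inducing modulo `q` a free resolution of the
residue field. The degree zero part is generated by `o`. -/
structure IsResolutionMod [IsLocalRing Q] (q : Q) (deg : S → ℕ) (o : S)
    (D : Module.End Q (S →₀ Q)) : Prop where
  mem : D ∈ homogeneousEnd Q deg (-1)
  sq : ∀ u, ∃ w, D (D u) = q • w
  deg_eq_zero_iff : ∀ s, deg s = 0 ↔ s = o
  exists_eq_single_iff : ∀ c, (∃ u ∈ gradedPiece Q deg 1, D u = Finsupp.single o c) ↔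
    c ∈ IsLocalRing.maximalIdeal Q
  exact : ∀ n : ℤ, 1 ≤ n → ∀ u ∈ gradedPiece Q deg n, ∀ w, D u = q • w →
    ∃ v ∈ gradedPiece Q deg (n + 1), ∃ w', u = D v + q • w'

/-- A square root `τ` modulo `q` of zero, in the power series over the endomorphisms of a free
module on a graded set, such that modulo `q` the complex with differential `τ 0` has homology in
degrees `0` and `1` only, isomorphic to the residue field and with the generator `τ 1 o` in degree
`1`. -/
structure IsTwistedResolutionMod [IsLocalRing Q] (q : Q) (deg : S → ℕ) (o : S)
    (τ : PowerSeries (Module.End Q (S →₀ Q))) : Prop where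
  coeff_mem : ∀ n : ℕ, PowerSeries.coeff n τ ∈ homogeneousEnd Q deg (2 * n - 1)
  sq : ∀ u, ∃ w, totalEnd (τ * τ) u = q • w
  deg_eq_zero_iff : ∀ s, deg s = 0 ↔ s = o
  exists_eq_single_iff : ∀ c,
    (∃ v ∈ gradedPiece Q deg 1, PowerSeries.coeff 0 τ v = Finsupp.single o c) ↔
      c ∈ IsLocalRing.maximalIdeal Q
  exact : ∀ n : ℤ, 2 ≤ n → ∀ v ∈ gradedPiece Q deg n, ∀ w, PowerSeries.coeff 0 τ v = q • w →
    ∃ y ∈ gradedPiece Q deg (n + 1), ∃ w', v = PowerSeries.coeff 0 τ y + q • w'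
  exists_eq_smul : ∀ v ∈ gradedPiece Q deg 1, ∀ w : S →₀ Q, PowerSeries.coeff 0 τ v = q • w →
    ∃ c : Q, ∃ y ∈ gradedPiece Q deg 2, ∃ w' : S →₀ Q,
      v = c • PowerSeries.coeff 1 τ (Finsupp.single o 1) + PowerSeries.coeff 0 τ y + q • w'
  mem_maximalIdeal : ∀ c : Q, ∀ y ∈ gradedPiece Q deg 2, ∀ w : S →₀ Q,
    c • PowerSeries.coeff 1 τ (Finsupp.single o 1) = PowerSeries.coeff 0 τ y + q • w →
      c ∈ IsLocalRing.maximalIdeal Q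

namespace IsTwistedResolutionMod

variable [IsLocalRing Q] {q : Q} {deg : S → ℕ} {o : S} {τ : PowerSeries (Module.End Q (S →₀ Q))}

lemma exists_totalEnd_totalEnd_eq_smul (h : IsTwistedResolutionMod q deg o τ) (u : ℕ × S →₀ Q) :
    ∃ w, totalEnd τ (totalEnd τ u) = q • w := by
  simpa [totalEnd_mul] using h.sq u

lemma exact_of_lower (h : IsTwistedResolutionMod q deg o τ) {n : ℤ} (hn : 2 ≤ n)
    {u : ℕ × S →₀ Q} (hu : u ∈ gradedPiece Q (totalDeg deg) n) {w : ℕ × S →₀ Q}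
    (hw : totalEnd τ u = q • w) {v₁ : ℕ × S →₀ Q}
    (hv₁ : v₁ ∈ gradedPiece Q (totalDeg deg) (n - 1)) {w₁ : ℕ × S →₀ Q}
    (hlow : lower Q S u = totalEnd τ v₁ + q • w₁) :
    ∃ v ∈ gradedPiece Q (totalDeg deg) (n + 1), ∃ w', u = totalEnd τ v + q • w' := by
  have hv : raise Q S v₁ ∈ gradedPiece Q (totalDeg deg) (n + 1) := by
    convert raise_mem_gradedPiece hv₁ using 2; ring
  obtain ⟨w₂, hw₂⟩ := h.exists_totalEnd_totalEnd_eq_smul (raise Q S v₁)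
  obtain ⟨x, hx, hux⟩ : ∃ x ∈ gradedPiece Q deg n,
      u - totalEnd τ (raise Q S v₁) = layer Q S 0 x + q • raise Q S w₁ := by
    refine ⟨_, bottom_mem_gradedPiece (sub_mem hu (apply_mem_gradedPiece (totalEnd_mem h.coeff_mem)
      hv (by ring))), ?_⟩
    conv_lhs => rw [← layer_bottom_add_raise_lower (u - totalEnd τ (raise Q S v₁))]
    rw [map_sub (lower Q S), lower_totalEnd, lower_raise, hlow, add_sub_cancel_left, map_smul]
  have hdx : PowerSeries.coeff 0 τ x =
      q • bottom Q S (w - w₂ - totalEnd τ (raise Q S w₁)) := by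
    have := congrArg (totalEnd τ) hux
    rw [map_sub, hw, hw₂, map_add, totalEnd_layer_zero, map_smul, ← sub_eq_iff_eq_add, ← smul_sub,
      ← smul_sub] at this
    rw [← map_smul, this, bottom_layer_zero]
  obtain ⟨y, hy, w₃, rfl⟩ := h.exact n hn x hx _ hdx
  refine ⟨raise Q S v₁ + layer Q S 0 y, add_mem hv (layer_zero_mem_gradedPiece hy),
    layer Q S 0 w₃ + raise Q S w₁, ?_⟩
  rw [eq_add_of_sub_eq hux, map_add, map_add, map_smul, totalEnd_layer_zero, smul_add]
  abel

variable (h : IsTwistedResolutionMod q deg o τ)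
include h

lemma coeff_zero_single : PowerSeries.coeff 0 τ (Finsupp.single o 1) = 0 :=
  eq_zero_of_mem_gradedPiece_of_neg (n := -1) (by norm_num) (h.coeff_mem 0 0 _
    (single_mem_gradedPiece (by exact_mod_cast (h.deg_eq_zero_iff o).2 rfl) 1))

lemma totalEnd_layer_one_single (c : Q) : totalEnd τ (layer Q S 1 (Finsupp.single o c)) =
    layer Q S 0 (c • PowerSeries.coeff 1 τ (Finsupp.single o 1)) := by
  rw [← Finsupp.smul_single_one, totalEnd_layer_one, map_smul, h.coeff_zero_single, smul_zero,
    map_zero, zero_add, map_smul]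

lemma totalDeg_eq_zero_iff (x : ℕ × S) : totalDeg deg x = 0 ↔ x = (0, o) := by
  simp [totalDeg, h.deg_eq_zero_iff, Prod.ext_iff, and_comm]

lemma exists_totalEnd_eq_single_iff (c : Q) :
    (∃ u ∈ gradedPiece Q (totalDeg deg) 1, totalEnd τ u = Finsupp.single (0, o) c) ↔
      c ∈ IsLocalRing.maximalIdeal Q := by
  rw [← h.exists_eq_single_iff, ← layer_single]
  constructor
  · rintro ⟨u, hu, huc⟩
    refine ⟨_, bottom_mem_gradedPiece hu, ?_⟩
    rw [← eq_layer_bottom (by norm_num) hu, totalEnd_layer_zero] at huc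
    simpa [bottom_layer_zero] using congrArg (bottom Q S) huc
  · rintro ⟨v, hv, hvc⟩
    exact ⟨_, layer_zero_mem_gradedPiece hv, by rw [totalEnd_layer_zero, hvc]⟩

lemma exact_totalEnd_one {u : ℕ × S →₀ Q} (hu : u ∈ gradedPiece Q (totalDeg deg) 1)
    {w : ℕ × S →₀ Q} (hw : totalEnd τ u = q • w) :
    ∃ v ∈ gradedPiece Q (totalDeg deg) 2, ∃ w', u = totalEnd τ v + q • w' := by
  obtain ⟨x, hx, rfl⟩ : ∃ x ∈ gradedPiece Q deg 1, layer Q S 0 x = u :=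
    ⟨_, bottom_mem_gradedPiece hu, eq_layer_bottom (by norm_num) hu⟩
  have hdx : PowerSeries.coeff 0 τ x = q • bottom Q S w := by
    rw [← map_smul, ← hw, totalEnd_layer_zero, bottom_layer_zero]
  obtain ⟨c, y, hy, w', rfl⟩ := h.exists_eq_smul x hx _ hdx
  refine ⟨layer Q S 0 y + layer Q S 1 (Finsupp.single o c),
    add_mem (layer_zero_mem_gradedPiece hy) ?_, layer Q S 0 w', ?_⟩
  · rw [layer_single]
    exact single_mem_gradedPiece (by simp [totalDeg, (h.deg_eq_zero_iff o).2 rfl]) c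
  · rw [map_add, map_add, map_add, totalEnd_layer_zero, h.totalEnd_layer_one_single, map_smul,
      map_smul _ q]
    abel

lemma exact_totalEnd_two {u : ℕ × S →₀ Q} (hu : u ∈ gradedPiece Q (totalDeg deg) 2)
    {w : ℕ × S →₀ Q} (hw : totalEnd τ u = q • w) :
    ∃ v ∈ gradedPiece Q (totalDeg deg) 3, ∃ w', u = totalEnd τ v + q • w' := by
  obtain ⟨c, hc⟩ : ∃ c, lower Q S u = layer Q S 0 (Finsupp.single o c) := by
    simp_rw [layer_single, ← Finsupp.support_subset_singleton']
    intro x hx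
    have : (totalDeg deg x : ℤ) = 0 := lower_mem_gradedPiece (n := 0) hu hx
    exact Finset.mem_singleton.2 ((h.totalDeg_eq_zero_iff x).1 (by exact_mod_cast this))
  have hdu : c • PowerSeries.coeff 1 τ (Finsupp.single o 1) =
      PowerSeries.coeff 0 τ (-bottom Q S u) + q • bottom Q S w := by
    rw [← layer_bottom_add_raise_lower u, hc, raise_layer, map_add, totalEnd_layer_zero,
      h.totalEnd_layer_one_single, ← map_add] at hw
    rw [← map_smul (bottom Q S), ← hw, bottom_layer_zero, map_neg, neg_add_cancel_left]
  have hmem := h.mem_maximalIdeal c _ (neg_mem (bottom_mem_gradedPiece hu)) _ hdu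
  obtain ⟨v₁, hv₁, hv₁c⟩ := (h.exists_totalEnd_eq_single_iff c).2 hmem
  exact h.exact_of_lower le_rfl hu hw hv₁ (w₁ := 0) (by simp [hc, hv₁c, layer_single])

lemma exact_totalEnd {n : ℤ} (hn : 1 ≤ n) {u : ℕ × S →₀ Q}
    (hu : u ∈ gradedPiece Q (totalDeg deg) n) {w : ℕ × S →₀ Q} (hw : totalEnd τ u = q • w) :
    ∃ v ∈ gradedPiece Q (totalDeg deg) (n + 1), ∃ w', u = totalEnd τ v + q • w' := by
  obtain ⟨k, rfl⟩ : ∃ k : ℕ, n = k + 1 := ⟨(n - 1).toNat, by omega⟩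
  induction k using Nat.twoStepInduction generalizing u w with
  | zero => exact h.exact_totalEnd_one hu hw
  | one => exact h.exact_totalEnd_two hu hw
  | more k ih _ =>
    have hlowu : lower Q S u ∈ gradedPiece Q (totalDeg deg) (k + 1) :=
      lower_mem_gradedPiece (by convert hu using 2; push_cast; ring)
    obtain ⟨v₁, hv₁, w₁, hlow⟩ := ih (w := lower Q S w)
      (by rw [← lower_totalEnd, hw, map_smul]) (by omega) hlowu
    exact h.exact_of_lower (by omega) hu hw (by convert hv₁ using 2; push_cast; ring) hlow

theorem isResolutionMod : IsResolutionMod q (totalDeg deg) (0, o) (totalEnd τ) where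
  mem := totalEnd_mem h.coeff_mem
  sq := h.exists_totalEnd_totalEnd_eq_smul
  deg_eq_zero_iff := h.totalDeg_eq_zero_iff
  exists_eq_single_iff := h.exists_totalEnd_eq_single_iff
  exact _ hn _ hu _ hw := h.exact_totalEnd hn hu hw

end IsTwistedResolutionMod

end ResolutionMod

section Scale

open Finset.HasAntidiagonal (antidiagonal mem_antidiagonal)

section Semiring

variable {Q R : Type*} [CommSemiring Q] [Semiring R] [Algebra Q R]

/-- The image of a power series `τ` under the substitution `X ↦ c • X`. -/
noncomputable def scale (c : Q) (τ : PowerSeries R) : PowerSeries R :=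
  PowerSeries.mk fun n => c ^ n • PowerSeries.coeff n τ

lemma coeff_scale (c : Q) (τ : PowerSeries R) (n : ℕ) :
    PowerSeries.coeff n (scale c τ) = c ^ n • PowerSeries.coeff n τ :=
  PowerSeries.coeff_mk n _

lemma scale_mul (c : Q) (τ τ' : PowerSeries R) : scale c (τ * τ') = scale c τ * scale c τ' := by
  ext n
  simp only [coeff_scale, PowerSeries.coeff_mul, Finset.smul_sum]
  refine Finset.sum_congr rfl fun p hp => ?_
  rw [smul_mul_smul_comm, ← pow_add, mem_antidiagonal.1 hp]

end Semiring

variable {Q S : Type*} [CommRing Q]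

lemma totalEnd_eq_smul_lower {τ : PowerSeries (Module.End Q (S →₀ Q))} {a : Q}
    (hτ : ∀ n, PowerSeries.coeff n τ = if n = 1 then a • 1 else 0) (u : ℕ × S →₀ Q) :
    totalEnd τ u = a • lower Q S u := by
  suffices totalEnd τ = a • lower Q S from LinearMap.congr_fun this u
  refine linearMap_ext_layer fun j v => ?_
  rw [totalEnd_layer, LinearMap.smul_apply]
  obtain _ | j := j
  · simp [hτ, lower_layer_zero]
  · rw [lower_layer_succ, Finset.sum_eq_single (1, j)]
    · simp [hτ]
    · rintro ⟨k, l⟩ hkl hne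
      have : k ≠ 1 := by
        rintro rfl
        exact hne (by rw [mem_antidiagonal] at hkl; grind)
      simp [hτ, this]
    · intro h
      exact absurd (mem_antidiagonal.2 (add_comm 1 j)) h

lemma apply_apply_mem_of_mem_smul_top {N T : Type*} [AddCommGroup N] [Module Q N] {I : Ideal Q}
    {U : N →ₗ[Q] (T →₀ Q)} (hU : U ∈ I • (⊤ : Submodule Q (N →ₗ[Q] (T →₀ Q)))) (v : N) (t : T) :
    U v t ∈ I := by
  induction hU using Submodule.smul_induction_on' with
  | smul a ha U _ => exact I.mul_mem_right _ ha
  | add U _ U' _ h h' => exact add_mem h h'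

lemma totalEnd_sub_totalEnd_mem {I : Ideal Q} {τ τ' : PowerSeries (Module.End Q (S →₀ Q))}
    (h0 : PowerSeries.coeff 0 τ = PowerSeries.coeff 0 τ')
    (hτ : ∀ n ≠ 0, PowerSeries.coeff n τ ∈ I • (⊤ : Submodule Q _))
    (hτ' : ∀ n ≠ 0, PowerSeries.coeff n τ' ∈ I • (⊤ : Submodule Q _))
    (u : ℕ × S →₀ Q) (x : ℕ × S) : totalEnd τ u x - totalEnd τ' u x ∈ I := by
  induction u using Finsupp.induction_linear with
  | zero => simp
  | add u u' hu hu' =>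
    rw [map_add, map_add, Finsupp.add_apply, Finsupp.add_apply, add_sub_add_comm]
    exact add_mem hu hu'
  | single y c =>
    rw [← layer_single, totalEnd_layer, totalEnd_layer, ← Finsupp.sub_apply,
      ← Finset.sum_sub_distrib, Finsupp.finsetSum_apply]
    refine sum_mem fun p _ => ?_
    obtain hp | hp := eq_or_ne p.1 0
    · simp [hp, h0]
    · rw [Finsupp.sub_apply, layer_apply, layer_apply]
      split_ifs
      · exact sub_mem (apply_apply_mem_of_mem_smul_top (hτ _ hp) _ _)
          (apply_apply_mem_of_mem_smul_top (hτ' _ hp) _ _)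
      · simp

end Scale

section TwistedResolution

variable {Q S M : Type*} [CommRing Q] [AddCommGroup M] [Module Q M] {f g : Q} {φ : M →ₗ[Q] Q}
  {deg : S → ℕ} {o : S} {d : Module.End Q (S →₀ Q)} {η : (S →₀ Q) →ₗ[Q] M}

lemma isExactPairOn_gradedPiece (hfg : IsExactPairOn f g Q) (n : ℤ) :
    IsExactPairOn f g (gradedPiece Q deg n) :=
  (hfg.finsupp _).of_linearEquiv (Finsupp.supportedEquivFinsupp _).symm

lemma smul_eq_zero_iff_exists_mem_gradedPiece (hfg : IsExactPairOn f g Q) {n : ℤ} {v : S →₀ Q}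
    (hv : v ∈ gradedPiece Q deg n) : f • v = 0 ↔ ∃ u ∈ gradedPiece Q deg n, v = g • u := by
  simpa [Subtype.ext_iff] using (isExactPairOn_gradedPiece (deg := deg) hfg n).left ⟨v, hv⟩

namespace IsSplicedResolution

lemma exists_eq_smul_add_d_one (C : IsSplicedResolution φ deg o d η) (hM : IsExactPairOn f g M)
    {w y : S →₀ Q} (hw : w ∈ gradedPiece Q deg 1) (hy : y ∈ gradedPiece Q deg 2)
    (hwy : f • w = d y) :
    ∃ u ∈ gradedPiece Q deg 1, ∃ y ∈ gradedPiece Q deg 2, w = g • u + d y := by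
  have hηw : f • η w = 0 := by
    rw [← map_smul]
    exact (C.η_eq_zero_iff _ (Submodule.smul_mem _ f hw)).2 ⟨y, hy, hwy.symm⟩
  obtain ⟨m, hm⟩ := (hM.left _).1 hηw
  obtain ⟨u, hu, rfl⟩ := C.exists_η_eq m
  obtain ⟨y', hy', hdy'⟩ := (C.η_eq_zero_iff _ (sub_mem hw (Submodule.smul_mem _ g hu))).1
    (by rw [map_sub, map_smul, hm, sub_self])
  exact ⟨u, hu, y', hy', by rw [hdy', add_sub_cancel]⟩

theorem exists_eq_smul_add_d (C : IsSplicedResolution φ deg o d η) (hQ : IsExactPairOn f g Q)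
    (hM : IsExactPairOn f g M) (k : ℕ) {w y : S →₀ Q} (hw : w ∈ gradedPiece Q deg (k + 1))
    (hy : y ∈ gradedPiece Q deg (k + 2)) (hwy : f • w = d y) :
    ∃ u ∈ gradedPiece Q deg (k + 1), ∃ y ∈ gradedPiece Q deg (k + 2), w = g • u + d y := by
  induction k generalizing f g w y with
  | zero => simpa using C.exists_eq_smul_add_d_one hM (by simpa using hw) (by simpa using hy) hwy
  | succ k ih =>
    push_cast at *
    have hdw : d w ∈ gradedPiece Q deg (k + 1) := apply_mem_gradedPiece C.d_mem hw (by ring)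
    obtain ⟨u, hu, hdwu⟩ := (smul_eq_zero_iff_exists_mem_gradedPiece hQ hdw).1
      (by rw [← map_smul, hwy, C.d_d])
    obtain ⟨u', -, y', hy', rfl⟩ :=
      ih hQ.symm hM.symm hu (by convert hw using 2; ring) hdwu.symm
    have hgf : g * f = 0 := (hQ.right f).2 ⟨1, (mul_one f).symm⟩
    have hy'' : y' ∈ gradedPiece Q deg (k + 1 + 1) := by convert hy' using 2; ring
    obtain ⟨x, hx, hdx⟩ := C.exact _ (by omega) (w - g • y')
      (sub_mem hw (Submodule.smul_mem _ g hy''))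
      (by rw [map_sub, hdwu, smul_add, smul_smul, hgf, zero_smul, zero_add, map_smul, sub_self])
    exact ⟨y', hy'', x, by convert hx using 2; ring, by rw [hdx, add_sub_cancel]⟩

theorem exists_eq_smul_add_d_of_d_eq_smul (C : IsSplicedResolution φ deg o d η)
    (hQ : IsExactPairOn f g Q) (hM : IsExactPairOn f g M) {n : ℤ} (hn : 2 ≤ n) {z u : S →₀ Q}
    (hz : z ∈ gradedPiece Q deg n) (hdz : d z = f • u) :
    ∃ y ∈ gradedPiece Q deg (n + 1), ∃ x, z = d y + f • x := by
  obtain ⟨k, rfl⟩ : ∃ k : ℕ, n = k + 2 := ⟨(n - 2).toNat, by omega⟩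
  have hgf : g * f = 0 := (hQ.right f).2 ⟨1, (mul_one f).symm⟩
  have hdzk : d z ∈ gradedPiece Q deg (k + 1) := apply_mem_gradedPiece C.d_mem hz (by ring)
  obtain ⟨u', hu', hdz'⟩ := (smul_eq_zero_iff_exists_mem_gradedPiece hQ.symm hdzk).1
    (by rw [hdz, smul_smul, hgf, zero_smul])
  obtain ⟨x, -, y, hy, rfl⟩ := C.exists_eq_smul_add_d hQ hM k hu' hz hdz'.symm
  obtain ⟨y', hy', hdy'⟩ := C.exact _ hn (z - f • y) (sub_mem hz (Submodule.smul_mem _ f hy))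
    (by rw [map_sub, hdz', smul_add, smul_smul, mul_comm, hgf, zero_smul, zero_add, map_smul,
      sub_self])
  exact ⟨y', hy', y, by rw [hdy', sub_add_cancel]⟩

lemma apply_η_coeff_one (C : IsSplicedResolution φ deg o d η)
    {τ : PowerSeries (Module.End Q (S →₀ Q))} (hτ : IsHomotopySystem f (homogeneousEnd Q deg) τ)
    (hd : PowerSeries.coeff 0 τ = d) : φ (η (PowerSeries.coeff 1 τ (Finsupp.single o 1))) = f := by
  have hmem := hτ.coeff_mem 1 0 _ (C.single_mem_zero 1)
  have hsq := LinearMap.congr_fun (hτ.coeff_mul_self 1) (Finsupp.single o 1)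
  rw [PowerSeries.coeff_mul] at hsq
  simpa [Finset.Nat.antidiagonal_succ, hd, C.d_eq_zero (C.single_mem_zero 1), C.d_eq_single _ hmem]
    using DFunLike.congr_fun hsq o

lemma η_d (C : IsSplicedResolution φ deg o d η) {y : S →₀ Q} (hy : y ∈ gradedPiece Q deg 2) :
    η (d y) = 0 :=
  (C.η_eq_zero_iff _ (C.d_mem 2 y hy)).2 ⟨y, hy, rfl⟩

end IsSplicedResolution

variable {τ : PowerSeries (Module.End Q (S →₀ Q))}

lemma coeff_scale_mul_self (hτ : IsHomotopySystem f (homogeneousEnd Q deg) τ) (c : Q) (n : ℕ) :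
    PowerSeries.coeff n (scale c τ * scale c τ) = if n = 1 then (c * f) • 1 else 0 := by
  rw [← scale_mul, coeff_scale, hτ.coeff_mul_self]
  split_ifs with hn
  · rw [hn, pow_one, smul_smul]
  · exact smul_zero _

variable [IsLocalRing Q]

lemma exists_d_eq_single_iff (C : IsSplicedResolution φ deg o d η)
    (hφ : LinearMap.range φ = IsLocalRing.maximalIdeal Q) (c : Q) :
    (∃ v ∈ gradedPiece Q deg 1, d v = Finsupp.single o c) ↔ c ∈ IsLocalRing.maximalIdeal Q := by
  rw [← hφ, LinearMap.mem_range]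
  constructor
  · rintro ⟨v, hv, hdv⟩
    exact ⟨η v, Finsupp.single_injective o ((C.d_eq_single v hv).symm.trans hdv)⟩
  · rintro ⟨x, rfl⟩
    obtain ⟨v, hv, rfl⟩ := C.exists_η_eq x
    exact ⟨v, hv, C.d_eq_single v hv⟩

theorem isTwistedResolutionMod_scale (C : IsSplicedResolution φ deg o d η)
    (hτ : IsHomotopySystem f (homogeneousEnd Q deg) τ) (hd : PowerSeries.coeff 0 τ = d) {α : M}
    (hα : η (PowerSeries.coeff 1 τ (Finsupp.single o 1)) = α) (h : IsResidueCover φ (g • α))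
    (hgf : g * f = 0) : IsTwistedResolutionMod 0 deg o (scale g τ) where
  coeff_mem n := by
    rw [coeff_scale]
    exact Submodule.smul_mem _ _ (hτ.coeff_mem n)
  sq u := ⟨0, by rw [totalEnd_eq_smul_lower (coeff_scale_mul_self hτ g), hgf, zero_smul, smul_zero]⟩
  deg_eq_zero_iff := C.deg_eq_zero_iff
  exists_eq_single_iff := by
    simpa [coeff_scale, hd] using exists_d_eq_single_iff C h.range_eq
  exact n hn v hv w hw := by
    obtain ⟨y, hy, hdy⟩ := C.exact n hn v hv (by simpa [coeff_scale, hd] using hw)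
    exact ⟨y, hy, 0, by simp [coeff_scale, hd, hdy]⟩
  exists_eq_smul v hv w hw := by
    have hφ : φ (η v) = 0 := by
      simpa [coeff_scale, hd, C.d_eq_single v hv] using hw
    obtain ⟨c, hc⟩ := h.apply_eq_zero_iff.1 hφ
    have hmem := hτ.coeff_mem 1 0 _ (C.single_mem_zero 1)
    obtain ⟨y, hy, hdy⟩ := (C.η_eq_zero_iff _
      (sub_mem hv (Submodule.smul_mem _ c (Submodule.smul_mem _ g hmem)))).1 (by simp [hα, hc])
    exact ⟨c, y, hy, 0, by simp [coeff_scale, hd, hdy]⟩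
  mem_maximalIdeal c y hy w hw := by
    rw [← h.smul_eq_zero_iff]
    simpa [coeff_scale, hd, hα, C.η_d hy] using congrArg η hw

theorem isTwistedResolutionMod (C : IsSplicedResolution φ deg o d η)
    (hτ : IsHomotopySystem f (homogeneousEnd Q deg) τ) (hd : PowerSeries.coeff 0 τ = d) {α : M}
    (hα : η (PowerSeries.coeff 1 τ (Finsupp.single o 1)) = α) (h : IsResidueCover φ (g • α))
    (hfg : IsExactPairOn f g Q) (hg : g ∈ IsLocalRing.maximalIdeal Q) :
    IsTwistedResolutionMod f deg o τ where
  coeff_mem := hτ.coeff_mem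
  sq u := ⟨lower Q S u, totalEnd_eq_smul_lower hτ.coeff_mul_self u⟩
  deg_eq_zero_iff := C.deg_eq_zero_iff
  exists_eq_single_iff := by
    rw [hd]
    exact exists_d_eq_single_iff C h.range_eq
  exact n hn v hv w hw := by
    have hM := h.isExactPairOn hfg hg (hα ▸ C.apply_η_coeff_one hτ hd)
    rw [hd] at hw ⊢
    exact C.exists_eq_smul_add_d_of_d_eq_smul hfg hM hn hv hw
  exists_eq_smul v hv w hw := by
    have hφα := hα ▸ C.apply_η_coeff_one hτ hd
    have hφ : φ (η v) = f * w o := by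
      simpa [hd, C.d_eq_single v hv] using DFunLike.congr_fun hw o
    obtain ⟨m, hm⟩ := h.exists_eq_smul_add_smul hg hφα hφ
    obtain ⟨x, hx, rfl⟩ := C.exists_η_eq m
    have hmem := hτ.coeff_mem 1 0 _ (C.single_mem_zero 1)
    obtain ⟨y, hy, hdy⟩ := (C.η_eq_zero_iff _
      (sub_mem hv (add_mem (Submodule.smul_mem _ (w o) hmem) (Submodule.smul_mem _ f hx)))).1
      (by simp [hα, hm])
    exact ⟨w o, y, hy, x, by rw [hd, hdy]; abel⟩
  mem_maximalIdeal c y hy w hw := by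
    refine h.mem_maximalIdeal_of_smul_eq_smul hfg hg (hα ▸ C.apply_η_coeff_one hτ hd) (v := η w) ?_
    simpa [hd, hα, C.η_d hy] using congrArg η hw

end TwistedResolution

section ResidueCover

variable {Q M : Type u} [CommRing Q] [IsLocalRing Q] [AddCommGroup M] [Module Q M] {f g : Q}
  {φ : M →ₗ[Q] Q} {α : M}

theorem IsResidueCover.exists_isHomotopySystem (h : IsResidueCover φ (g • α))
    (hf : f ∈ IsLocalRing.maximalIdeal Q ^ 2) {S : Type*} {deg : S → ℕ} {o : S}
    {d : Module.End Q (S →₀ Q)} {η : (S →₀ Q) →ₗ[Q] M} (C : IsSplicedResolution φ deg o d η) :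
    ∃ τ, IsHomotopySystem f (homogeneousEnd Q deg) τ ∧ PowerSeries.coeff 0 τ = d ∧
      ∀ n ≠ 0, PowerSeries.coeff n τ ∈ IsLocalRing.maximalIdeal Q • (⊤ : Submodule Q _) := by
  refine ExactPairBetti.exists_isHomotopySystem hf C.d_mem (LinearMap.ext C.d_d) (fun c hc => ?_)
    fun p hp Z hZ hdZ => C.exists_homotopy_of_two_le hp hZ hdZ
  obtain ⟨x, rfl⟩ := h.mem_range_iff.2 hc
  exact C.exists_homotopy_smul_one h.apply_smul_comm x

theorem IsResidueCover.exists_isResolutionMod (h : IsResidueCover φ (g • α)) (hα : φ α = f)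
    (hfg : IsExactPairOn f g Q) (hf : f ∈ IsLocalRing.maximalIdeal Q ^ 2)
    (hg : g ∈ IsLocalRing.maximalIdeal Q) :
    ∃ (S : Type u) (deg : S → ℕ) (o : S) (D D' : Module.End Q (S →₀ Q)),
      IsResolutionMod 0 deg o D ∧ IsResolutionMod f deg o D' ∧
        ∀ u s, D u s - D' u s ∈ IsLocalRing.maximalIdeal Q := by
  obtain ⟨S, deg, o, d, η, C⟩ := exists_isSplicedResolution φ
  obtain ⟨τ, hτ, hd, hmem⟩ := h.exists_isHomotopySystem hf C
  have h' : IsResidueCover φ (g • η (PowerSeries.coeff 1 τ (Finsupp.single o 1))) := by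
    rwa [h.smul_congr hg (by rw [C.apply_η_coeff_one hτ hd, hα])]
  have hgf : g * f = 0 := (hfg.right f).2 ⟨1, (mul_one f).symm⟩
  refine ⟨ℕ × S, totalDeg deg, (0, o), totalEnd (scale g τ), totalEnd τ,
    (isTwistedResolutionMod_scale C hτ hd rfl h' hgf).isResolutionMod,
    (isTwistedResolutionMod C hτ hd rfl h' hfg hg).isResolutionMod,
    totalEnd_sub_totalEnd_mem ?_ (fun n hn => ?_) hmem⟩
  · rw [coeff_scale, pow_zero, one_smul]
  · rw [coeff_scale]
    exact Submodule.smul_mem _ _ (hmem n hn)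

end ResidueCover

theorem exists_isResolutionMod {Q : Type u} [CommRing Q] [IsLocalRing Q] {f g : Q}
    (hfg : IsExactPairOn f g Q) (hf : f ∈ IsLocalRing.maximalIdeal Q ^ 2)
    (hg : g ∈ IsLocalRing.maximalIdeal Q) :
    ∃ (S : Type u) (deg : S → ℕ) (o : S) (D D' : Module.End Q (S →₀ Q)),
      IsResolutionMod 0 deg o D ∧ IsResolutionMod f deg o D' ∧
        ∀ u s, D u s - D' u s ∈ IsLocalRing.maximalIdeal Q := by
  obtain ⟨N, φ, α, hα, h⟩ := hfg.exists_isResidueCover (Ideal.pow_le_self two_ne_zero hf) hg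
  exact h.exists_isResolutionMod hα hfg hf hg

/-! ### Betti numbers from resolutions -/

section FreePiece

variable {Q S : Type*} [CommRing Q] (B : Type*) [CommRing B] [Algebra Q B] {deg : S → ℕ}
  {n : ℕ} {q : Q}

/-- The degree `n` part of the free `B`-module on a graded set. -/
abbrev FreePiece (deg : S → ℕ) (n : ℕ) : Type _ := {s // deg s = n} →₀ B

/-- The projection to the degree `n` part, followed by the base change to `B`. -/
noncomputable def toFreePiece (deg : S → ℕ) (n : ℕ) : (S →₀ Q) →ₗ[Q] FreePiece B deg n :=
  Finsupp.mapRange.linearMap (Algebra.linearMap Q B) ∘ₗ Finsupp.lsubtypeDomain {s | deg s = n}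

/-- The map from degree `n + 1` to degree `n` induced over `B` by an operator over `Q`. -/
noncomputable def freePieceMap (deg : S → ℕ) (D : Module.End Q (S →₀ Q)) (n : ℕ) :
    FreePiece B deg (n + 1) →ₗ[B] FreePiece B deg n :=
  Finsupp.linearCombination B fun s => toFreePiece B deg n (D (Finsupp.single s.1 1))

lemma toFreePiece_apply (v : S →₀ Q) (s : {s // deg s = n}) :
    toFreePiece B deg n v s = algebraMap Q B (v s) :=
  rfl

lemma toFreePiece_single (s : {s // deg s = n}) (c : Q) :
    toFreePiece B deg n (Finsupp.single s.1 c) = Finsupp.single s (algebraMap Q B c) := by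
  classical
  ext t
  simp only [toFreePiece_apply, Finsupp.single_apply, Subtype.ext_iff]
  split_ifs <;> simp

lemma toFreePiece_smul_eq_zero (hq : algebraMap Q B q = 0) (w : S →₀ Q) :
    toFreePiece B deg n (q • w) = 0 := by
  ext s
  simp [hq, toFreePiece_apply, Algebra.smul_def]

lemma freePieceMap_toFreePiece (D : Module.End Q (S →₀ Q)) {v : S →₀ Q}
    (hv : v ∈ gradedPiece Q deg (n + 1 : ℕ)) :
    freePieceMap B deg D n (toFreePiece B deg (n + 1) v) = toFreePiece B deg n (D v) := by
  refine gradedPiece_le_iff (N := LinearMap.eqLocus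
    ((freePieceMap B deg D n).restrictScalars Q ∘ₗ toFreePiece B deg (n + 1))
    (toFreePiece B deg n ∘ₗ D)) |>.2 (fun s hs => ?_) hv
  have hs' : deg s = n + 1 := by exact_mod_cast hs
  change freePieceMap B deg D n (toFreePiece B deg (n + 1) (Finsupp.single s 1)) = _
  rw [toFreePiece_single B ⟨s, hs'⟩, freePieceMap, Finsupp.linearCombination_single, map_one,
    one_smul]
  rfl

lemma exists_toFreePiece_eq (hB : Function.Surjective (algebraMap Q B)) (y : FreePiece B deg n) :
    ∃ v ∈ gradedPiece Q deg n, toFreePiece B deg n v = y := by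
  induction y using Finsupp.induction_linear with
  | zero => exact ⟨0, zero_mem _, map_zero _⟩
  | add x y hx hy =>
    obtain ⟨v, hv, rfl⟩ := hx
    obtain ⟨w, hw, rfl⟩ := hy
    exact ⟨v + w, add_mem hv hw, map_add _ _ _⟩
  | single s b =>
    obtain ⟨c, rfl⟩ := hB b
    exact ⟨_, single_mem_gradedPiece (congrArg _ s.2) c, toFreePiece_single B s c⟩

variable {B}

lemma exists_eq_smul_of_toFreePiece_eq_zero (hq : RingHom.ker (algebraMap Q B) = Ideal.span {q})
    {v : S →₀ Q} (hv : v ∈ gradedPiece Q deg n) (h : toFreePiece B deg n v = 0) :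
    ∃ w, v = q • w := by
  have hdvd : ∀ s, ∃ c, v s = q * c := fun s => by
    by_cases hs : deg s = n
    · have hker : v s ∈ Ideal.span {q} := hq ▸ DFunLike.congr_fun h (⟨s, hs⟩ : {s // deg s = n})
      exact Ideal.mem_span_singleton.1 hker
    · exact ⟨0, by rw [mul_zero, (Finsupp.mem_supported' _ _).1 hv s (by simpa using hs)]⟩
  choose c hc using hdvd
  refine ⟨v.support.sum fun s => Finsupp.single s (c s), ?_⟩
  conv_lhs => rw [← v.sum_single]
  simp only [Finsupp.sum, Finset.smul_sum, Finsupp.smul_single, smul_eq_mul, ← hc]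

end FreePiece

namespace IsResolutionMod

variable {Q S : Type u} [CommRing Q] [IsLocalRing Q] {q : Q} {deg : S → ℕ} {o : S}
  {D : Module.End Q (S →₀ Q)}

lemma apply_mem (H : IsResolutionMod q deg o D) {n : ℕ} {v : S →₀ Q}
    (hv : v ∈ gradedPiece Q deg (n + 1 : ℕ)) : D v ∈ gradedPiece Q deg n :=
  apply_mem_gradedPiece H.mem hv (by push_cast; ring)

lemma eq_single_of_mem_gradedPiece (H : IsResolutionMod q deg o D) {v : S →₀ Q}
    (hv : v ∈ gradedPiece Q deg (0 : ℕ)) : v = Finsupp.single o (v o) := by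
  refine (Finsupp.support_subset_singleton.1 fun s hs => ?_)
  have : deg s = 0 := by exact_mod_cast hv hs
  exact Finset.mem_singleton.2 ((H.deg_eq_zero_iff s).1 this)

lemma single_mem_gradedPiece (H : IsResolutionMod q deg o D) (c : Q) :
    Finsupp.single o c ∈ gradedPiece Q deg (0 : ℕ) :=
  ExactPairBetti.single_mem_gradedPiece (congrArg _ ((H.deg_eq_zero_iff o).2 rfl)) c

section Complex

variable (B : Type u) [CommRing B] [Algebra Q B]

/-- The complex of free `B`-modules with differential induced by `D`. -/
noncomputable def complex (H : IsResolutionMod q deg o D)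
    (hB : Function.Surjective (algebraMap Q B)) (hq : q ∈ RingHom.ker (algebraMap Q B)) :
    ChainComplex (ModuleCat.{u} B) ℕ :=
  ChainComplex.of (fun n => ModuleCat.of B (FreePiece B deg n))
    (fun n => ModuleCat.ofHom (freePieceMap B deg D n)) fun n => by
      refine ModuleCat.hom_ext (LinearMap.ext fun y => ?_)
      obtain ⟨v, hv, rfl⟩ := exists_toFreePiece_eq B hB y
      change freePieceMap B deg D n (freePieceMap B deg D (n + 1) _) = 0
      obtain ⟨w, hw⟩ := H.sq v
      rw [freePieceMap_toFreePiece B D hv, freePieceMap_toFreePiece B D (H.apply_mem hv), hw,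
        toFreePiece_smul_eq_zero B hq]

lemma complex_d (H : IsResolutionMod q deg o D) (hB : Function.Surjective (algebraMap Q B))
    (hq : q ∈ RingHom.ker (algebraMap Q B)) (n : ℕ) :
    (H.complex B hB hq).d (n + 1) n = ModuleCat.ofHom (freePieceMap B deg D n) :=
  ChainComplex.of_d (fun n => ModuleCat.of B (FreePiece B deg n))
    (fun n => ModuleCat.ofHom (freePieceMap B deg D n)) n

variable {B} in
lemma exists_freePieceMap_eq (H : IsResolutionMod q deg o D)
    (hB : Function.Surjective (algebraMap Q B))
    (hq : RingHom.ker (algebraMap Q B) = Ideal.span {q}) {n : ℕ} {y : FreePiece B deg (n + 1)}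
    (hy : freePieceMap B deg D n y = 0) : ∃ x, freePieceMap B deg D (n + 1) x = y := by
  obtain ⟨v, hv, rfl⟩ := exists_toFreePiece_eq B hB y
  rw [freePieceMap_toFreePiece B D hv] at hy
  obtain ⟨w, hw⟩ := exists_eq_smul_of_toFreePiece_eq_zero hq (H.apply_mem hv) hy
  obtain ⟨x, hx, w', rfl⟩ := H.exact (n + 1) (by omega) v (by exact_mod_cast hv) w hw
  have hq0 := hq.ge (Ideal.mem_span_singleton_self q)
  refine ⟨toFreePiece B deg _ x, ?_⟩
  rw [freePieceMap_toFreePiece B D (by exact_mod_cast hx), map_add, toFreePiece_smul_eq_zero B hq0,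
    add_zero]

end Complex

end IsResolutionMod

lemma quasiIso_toSingle₀Equiv_symm {A : Type u} [CommRing A] {C : ChainComplex (ModuleCat.{u} A) ℕ}
    {X : ModuleCat.{u} A} (ε : C.X 0 ⟶ X) (hε : C.d 1 0 ≫ ε = 0) (hsurj : Function.Surjective ε)
    (hzero : ∀ y, ε y = 0 → ∃ v, C.d 1 0 v = y)
    (hsucc : ∀ n y, C.d (n + 1) n y = 0 → ∃ v, C.d (n + 2) (n + 1) v = y) :
    QuasiIso ((C.toSingle₀Equiv X).symm ⟨ε, hε⟩) := by
  refine ⟨fun n => ?_⟩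
  cases n with
  | zero =>
    rw [ChainComplex.quasiIsoAt₀_iff, ShortComplex.quasiIso_iff_of_zeros' _ (C.shape _ _ (by simp))
      rfl rfl, ShortComplex.moduleCat_exact_iff]
    have hf := ChainComplex.toSingle₀Equiv_symm_apply_f_zero ε hε
    refine ⟨fun y hy => hzero y ?_, ?_⟩
    · rw [← hf]
      exact hy
    · change Epi (((C.toSingle₀Equiv X).symm ⟨ε, hε⟩).f 0)
      rw [hf]
      exact (ModuleCat.epi_iff_surjective _).2 hsurj
  | succ n =>
    rw [quasiIsoAt_iff_exactAt' _ _ (ChainComplex.exactAt_succ_single_obj _ _),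
      HomologicalComplex.exactAt_iff' _ (n + 2) (n + 1) n (by simp) (by simp),
      ShortComplex.moduleCat_exact_iff]
    exact hsucc n

lemma algebraMap_eq_zero_iff_mem_maximalIdeal {A K : Type*} [CommRing A] [IsLocalRing A] [Field K]
    [Algebra A K] (hK : Function.Surjective (algebraMap A K)) (x : A) :
    algebraMap A K x = 0 ↔ x ∈ IsLocalRing.maximalIdeal A := by
  rw [← IsLocalRing.eq_maximalIdeal (RingHom.ker_isMaximal_of_surjective _ hK), RingHom.mem_ker]

namespace IsResolutionMod

variable {Q S : Type u} [CommRing Q] [IsLocalRing Q] {q : Q} {deg : S → ℕ} {o : S}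
  {D : Module.End Q (S →₀ Q)} (H : IsResolutionMod q deg o D) {A : Type u} [CommRing A]
  [Algebra Q A] (K : Type u) [Field K] [Algebra A K] [Algebra Q K] [IsScalarTower Q A K]

section Augmentation

variable (A) in
/-- The augmentation of the complex induced over `A`, with values in a residue field. -/
noncomputable def augmentation (deg : S → ℕ) : FreePiece A deg 0 →ₗ[A] K :=
  Finsupp.linearCombination A fun _ => 1

variable {K}

include H in
lemma augmentation_toFreePiece {v : S →₀ Q} (hv : v ∈ gradedPiece Q deg (0 : ℕ)) :
    augmentation A K deg (toFreePiece A deg 0 v) = algebraMap Q K (v o) := by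
  rw [H.eq_single_of_mem_gradedPiece hv, toFreePiece_single A ⟨o, (H.deg_eq_zero_iff o).2 rfl⟩,
    augmentation, Finsupp.linearCombination_single, Finsupp.single_eq_same,
    ← Algebra.algebraMap_eq_smul_one, ← IsScalarTower.algebraMap_apply]

include H in
lemma augmentation_surjective (hK : Function.Surjective (algebraMap Q K)) :
    Function.Surjective (augmentation A K deg) := fun y => by
  obtain ⟨c, rfl⟩ := hK y
  exact ⟨_, (H.augmentation_toFreePiece (H.single_mem_gradedPiece c)).trans
    (by rw [Finsupp.single_eq_same])⟩

variable (hA : Function.Surjective (algebraMap Q A)) (hK : Function.Surjective (algebraMap Q K))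

include H hA hK

lemma augmentation_freePieceMap (y : FreePiece A deg 1) :
    augmentation A K deg (freePieceMap A deg D 0 y) = 0 := by
  obtain ⟨v, hv, rfl⟩ := exists_toFreePiece_eq A hA y
  have hDv := H.apply_mem hv
  rw [freePieceMap_toFreePiece A D hv, H.augmentation_toFreePiece hDv,
    algebraMap_eq_zero_iff_mem_maximalIdeal hK]
  exact (H.exists_eq_single_iff _).1 ⟨v, hv, H.eq_single_of_mem_gradedPiece hDv⟩

lemma exists_freePieceMap_eq_of_augmentation_eq_zero {y : FreePiece A deg 0}
    (hy : augmentation A K deg y = 0) : ∃ x, freePieceMap A deg D 0 x = y := by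
  obtain ⟨v, hv, rfl⟩ := exists_toFreePiece_eq A hA y
  rw [H.augmentation_toFreePiece hv, algebraMap_eq_zero_iff_mem_maximalIdeal hK,
    ← H.exists_eq_single_iff] at hy
  obtain ⟨u, hu, hDu⟩ := hy
  refine ⟨toFreePiece A deg 1 u, ?_⟩
  rw [freePieceMap_toFreePiece A D hu, hDu, ← H.eq_single_of_mem_gradedPiece hv]

end Augmentation

variable (hA : Function.Surjective (algebraMap Q A)) (hK : Function.Surjective (algebraMap Q K))
  (hq : RingHom.ker (algebraMap Q A) = Ideal.span {q})

/-- The free resolution of a residue field `K` over `A = Q / (q)` induced by `D`. -/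
noncomputable def projectiveResolution : ProjectiveResolution (ModuleCat.of A K) where
  complex := H.complex A hA (hq.ge (Ideal.mem_span_singleton_self q))
  projective n := inferInstanceAs (Projective (ModuleCat.of A (FreePiece A deg n)))
  π := (ChainComplex.toSingle₀Equiv _ _).symm ⟨ModuleCat.ofHom (augmentation A K deg), by
    rw [complex_d]
    exact ModuleCat.hom_ext (LinearMap.ext (H.augmentation_freePieceMap hA hK))⟩
  quasiIso := by
    refine quasiIso_toSingle₀Equiv_symm _ _ (H.augmentation_surjective hK) (fun y hy => ?_)
      fun n y hy => ?_
    · rw [complex_d]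
      exact H.exists_freePieceMap_eq_of_augmentation_eq_zero hA hK hy
    · rw [complex_d] at hy ⊢
      exact H.exists_freePieceMap_eq hA hq hy

end IsResolutionMod

section ResidueField

variable {A K L : Type u} [CommRing A] [IsLocalRing A] [Field K] [Field L] [Algebra A K]
  [Algebra A L]

/-- The isomorphism between two residue fields of a local ring. -/
noncomputable def residueFieldEquiv (hK : Function.Surjective (algebraMap A K))
    (hL : Function.Surjective (algebraMap A L)) : K ≃ₐ[A] L :=
  have hker : RingHom.ker (Algebra.ofId A K) = RingHom.ker (Algebra.ofId A L) := by
    ext x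
    exact (algebraMap_eq_zero_iff_mem_maximalIdeal hK x).trans
      (algebraMap_eq_zero_iff_mem_maximalIdeal hL x).symm
  (Ideal.quotientKerAlgEquivOfSurjective hK).symm.trans
    ((Ideal.quotientEquivAlgOfEq A hker).trans (Ideal.quotientKerAlgEquivOfSurjective hL))

lemma rank_tensorProduct_eq (hK : Function.Surjective (algebraMap A K))
    (hL : Function.Surjective (algebraMap A L)) {M N : Type u} [AddCommGroup M] [AddCommGroup N]
    [Module A M] [Module L N] (e : M ≃+ N) (he : ∀ (a : A) x, e (a • x) = algebraMap A L a • e x) :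
    Module.rank K (K ⊗[A] M) = Module.rank L N := by
  let : Module A N := Module.compHom N (algebraMap A L)
  have : IsScalarTower A L N := .of_algebraMap_smul fun _ _ => rfl
  let e' : M ≃ₗ[A] N := { e with map_smul' := he }
  let ρ := residueFieldEquiv hK hL
  have : TensorProduct.CompatibleSMul A L L N := .of_algebraMap_surjective _ _ hL
  let r : K ⊗[A] M ≃+ L ⊗[A] N := (TensorProduct.congr ρ.toLinearEquiv e').toAddEquiv
  have hr (c : K) (x : K ⊗[A] M) : r (c • x) = ρ c • r x := by
    induction x using TensorProduct.induction_on with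
    | zero => simp
    | add x y hx hy => simp only [smul_add, map_add, hx, hy]
    | tmul x y =>
      change ρ (c * x) ⊗ₜ[A] e y = (ρ c * ρ x) ⊗ₜ[A] e y
      rw [map_mul]
  calc Module.rank K (K ⊗[A] M) = Module.rank L (L ⊗[A] N) :=
        rank_eq_of_equiv_equiv ρ r ρ.bijective hr
    _ = Module.rank L N := (TensorProduct.lidOfCompatibleSMul A L N).rank_eq

end ResidueField

/-- The `i`-th Betti number of `M` over a local ring, as a cardinal. -/
noncomputable def bettiRank (A : Type u) [CommRing A] [IsLocalRing A] (M : Type u)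
    [AddCommGroup M] [Module A M] (i : ℕ) : Cardinal.{u} :=
  Module.rank (IsLocalRing.ResidueField A)
    (IsLocalRing.ResidueField A ⊗[A]
      (((Tor (ModuleCat.{u} A) i).obj (ModuleCat.of A M)).obj
        (ModuleCat.of A (IsLocalRing.ResidueField A))))

/-- A linear isomorphism over `A` onto a module over an `A`-algebra `L`, in terms of restriction of
scalars. -/
noncomputable def restrictScalarsIso {A L : Type u} [CommRing A] [CommRing L] [Algebra A L]
    {M N : Type u} [AddCommGroup M] [AddCommGroup N] [Module A M] [Module A N] [Module L N]
    [IsScalarTower A L N] (e : M ≃ₗ[A] N) :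
    ModuleCat.of A M ≅ (ModuleCat.restrictScalars (algebraMap A L)).obj (ModuleCat.of L N) :=
  (e.toAddEquiv.toLinearEquiv (M₂ := (ModuleCat.restrictScalars (algebraMap A L)).obj
    (ModuleCat.of L N)) fun a x =>
      (map_smul e a x).trans (algebraMap_smul L a (e x)).symm).toModuleIso

section Tensor

variable {Q A K L : Type u} [CommRing Q] [CommRing A] [IsLocalRing A] [Field K] [Field L]
  [Algebra A K] [Algebra A L] (hK : Function.Surjective (algebraMap A K))
  (hL : Function.Surjective (algebraMap A L)) {S : Type u} {deg : S → ℕ} {n : ℕ}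

variable (deg n) in
/-- The degree `n` part of the free module over `A` becomes that over a residue field `L` when
tensored with a residue field `K`. -/
noncomputable def tensorFreePieceEquiv : K ⊗[A] FreePiece A deg n ≃ₗ[A] FreePiece L deg n := by
  classical
  exact (TensorProduct.finsuppScalarRight A A K {s // deg s = n}).trans
    (Finsupp.mapRange.linearEquiv (residueFieldEquiv hK hL).toLinearEquiv)

variable [Algebra Q A] [Algebra Q L] [IsScalarTower Q A L]

lemma tensorFreePieceEquiv_tmul (x : K) (v : S →₀ Q) :
    tensorFreePieceEquiv hK hL deg n (x ⊗ₜ toFreePiece A deg n v) =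
      residueFieldEquiv hK hL x • toFreePiece L deg n v := by
  classical
  ext s
  change residueFieldEquiv hK hL (TensorProduct.finsuppScalarRight A A K _ _ s) = _
  rw [TensorProduct.finsuppScalarRight_apply_tmul_apply, map_smul, Finsupp.smul_apply,
    toFreePiece_apply, toFreePiece_apply, IsScalarTower.algebraMap_apply Q A L, Algebra.smul_def,
    smul_eq_mul, mul_comm]

lemma tensorFreePieceEquiv_lTensor (hA : Function.Surjective (algebraMap Q A))
    (D : Module.End Q (S →₀ Q)) (x : K ⊗[A] FreePiece A deg (n + 1)) :
    tensorFreePieceEquiv hK hL deg n ((freePieceMap A deg D n).lTensor K x) =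
      freePieceMap L deg D n (tensorFreePieceEquiv hK hL deg (n + 1) x) := by
  induction x using TensorProduct.induction_on with
  | zero => simp only [map_zero]
  | add x y hx hy => simp only [map_add, hx, hy]
  | tmul x y =>
    obtain ⟨v, hv, rfl⟩ := exists_toFreePiece_eq A hA y
    rw [LinearMap.lTensor_tmul, freePieceMap_toFreePiece A D hv, tensorFreePieceEquiv_tmul,
      tensorFreePieceEquiv_tmul, map_smul, freePieceMap_toFreePiece L D hv]

end Tensor

namespace IsResolutionMod

variable {Q S : Type u} [CommRing Q] [IsLocalRing Q] {q : Q} {deg : S → ℕ} {o : S}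
  {D : Module.End Q (S →₀ Q)} (H : IsResolutionMod q deg o D)

section TensorComplex

variable {A K L : Type u} [CommRing A] [IsLocalRing A] [Field K] [Field L]
  [Algebra Q A] [Algebra Q L] [Algebra A K] [Algebra A L] [IsScalarTower Q A L]
  (hA : Function.Surjective (algebraMap Q A)) (hqA : q ∈ RingHom.ker (algebraMap Q A))
  (hLQ : Function.Surjective (algebraMap Q L)) (hqL : q ∈ RingHom.ker (algebraMap Q L))
  (hK : Function.Surjective (algebraMap A K)) (hL : Function.Surjective (algebraMap A L))

/-- The complex over `A` becomes the one over a residue field `L` when tensored with a residue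
field `K`. -/
noncomputable def tensorComplexIso :
    (((MonoidalCategory.tensoringLeft (ModuleCat.{u} A)).obj
      (ModuleCat.of A K)).mapHomologicalComplex _).obj (H.complex A hA hqA) ≅
    ((ModuleCat.restrictScalars (algebraMap A L)).mapHomologicalComplex _).obj
      (H.complex L hLQ hqL) :=
  HomologicalComplex.Hom.isoOfComponents
    (fun n => restrictScalarsIso (tensorFreePieceEquiv hK hL deg n)) fun i j hij => by
      obtain rfl : j + 1 = i := hij
      change _ ≫ (ModuleCat.restrictScalars (algebraMap A L)).map
          ((H.complex L hLQ hqL).d (j + 1) j) =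
        MonoidalCategoryStruct.whiskerLeft (ModuleCat.of A K)
          ((H.complex A hA hqA).d (j + 1) j) ≫ _
      have hdL : (H.complex L hLQ hqL).d (j + 1) j = ModuleCat.ofHom (freePieceMap L deg D j) :=
        H.complex_d L hLQ hqL j
      have hdA : (H.complex A hA hqA).d (j + 1) j = ModuleCat.ofHom (freePieceMap A deg D j) :=
        H.complex_d A hA hqA j
      rw [hdL, hdA]
      refine ModuleCat.hom_ext (LinearMap.ext fun x => ?_)
      exact (tensorFreePieceEquiv_lTensor hK hL hA D x).symm

end TensorComplex

section Betti

variable {A L : Type u} [CommRing A] [IsLocalRing A] [Field L] [Algebra Q A] [Algebra Q L]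
  [Algebra A L] [IsScalarTower Q A L]

lemma bettiRank_eq (hA : Function.Surjective (algebraMap Q A))
    (hqA : RingHom.ker (algebraMap Q A) = Ideal.span {q})
    (hLQ : Function.Surjective (algebraMap Q L)) (hqL : q ∈ RingHom.ker (algebraMap Q L)) (i : ℕ) :
    bettiRank A (IsLocalRing.ResidueField A) i =
      Module.rank L ((H.complex L hLQ hqL).homology i) := by
  let K := IsLocalRing.ResidueField A
  let _ : Algebra Q K := ((algebraMap A K).comp (algebraMap Q A)).toAlgebra
  have : IsScalarTower Q A K := .of_algebraMap_eq fun _ => rfl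
  have hK : Function.Surjective (algebraMap A K) := IsLocalRing.residue_surjective
  have hL : Function.Surjective (algebraMap A L) := fun x =>
    (hLQ x).imp' _ fun y hy => (IsScalarTower.algebraMap_apply Q A L y).symm.trans hy
  let P := H.projectiveResolution K hA (hK.comp hA) hqA
  let F := ModuleCat.restrictScalars.{u} (algebraMap A L)
  let e : ((Tor (ModuleCat.{u} A) i).obj (ModuleCat.of A K)).obj (ModuleCat.of A K) ≅
      F.obj ((H.complex L hLQ hqL).homology i) :=
    P.isoLeftDerivedObj _ i ≪≫
      (HomologicalComplex.homologyFunctor _ _ i).mapIso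
        (H.tensorComplexIso hA (hqA.ge (Ideal.mem_span_singleton_self q)) hLQ hqL hK hL) ≪≫
      ((H.complex L hLQ hqL).sc i).mapHomologyIso F
  exact rank_tensorProduct_eq hK hL e.toLinearEquiv.toAddEquiv (map_smul e.toLinearEquiv)

end Betti

variable {q' : Q} {D' : Module.End Q (S →₀ Q)} {L : Type u} [Field L] [Algebra Q L]

lemma complex_eq_of_sub_mem_maximalIdeal (H' : IsResolutionMod q' deg o D')
    (hDD' : ∀ u s, D u s - D' u s ∈ IsLocalRing.maximalIdeal Q)
    (hL : Function.Surjective (algebraMap Q L)) (hq : q ∈ RingHom.ker (algebraMap Q L))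
    (hq' : q' ∈ RingHom.ker (algebraMap Q L)) : H.complex L hL hq = H'.complex L hL hq' := by
  have h (n : ℕ) : freePieceMap L deg D n = freePieceMap L deg D' n := by
    refine congrArg (Finsupp.linearCombination L) (funext fun s => Finsupp.ext fun t => ?_)
    rw [toFreePiece_apply, toFreePiece_apply, ← sub_eq_zero, ← map_sub,
      algebraMap_eq_zero_iff_mem_maximalIdeal hL]
    exact hDD' _ _
  simp only [complex, h]

end IsResolutionMod

end ExactPairBetti

open IsLocalRing ExactPairBetti in
theorem betti_residueField_eq_of_exact_zerodivisor_mem_sq_general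
    {Q : Type u} [CommRing Q] [IsLocalRing Q] {f g : Q} (hg : g ∈ maximalIdeal Q)
    (hf : f ∈ maximalIdeal Q ^ 2) (hannf : ∀ x : Q, x * f = 0 ↔ x ∈ Ideal.span {g})
    (hanng : ∀ x : Q, x * g = 0 ↔ x ∈ Ideal.span {f}) [IsLocalRing (Q ⧸ Ideal.span {f})] (i : ℕ) :
    bettiRank Q (ResidueField Q) i =
      bettiRank (Q ⧸ Ideal.span {f}) (ResidueField (Q ⧸ Ideal.span {f})) i := by
  have hfg : IsExactPairOn f g Q :=
    ⟨fun x => by rw [smul_eq_mul, mul_comm, hannf, Ideal.mem_span_singleton]; rfl,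
      fun x => by rw [smul_eq_mul, mul_comm, hanng, Ideal.mem_span_singleton]; rfl⟩
  obtain ⟨S, deg, o, D, D', H, H', hDD'⟩ := exists_isResolutionMod hfg hf hg
  let k := ResidueField Q
  have hk : Function.Surjective (algebraMap Q k) := residue_surjective
  have hfk : f ∈ RingHom.ker (algebraMap Q k) :=
    (residue_eq_zero_iff f).2 (Ideal.pow_le_self two_ne_zero hf)
  let _ : Algebra (Q ⧸ Ideal.span {f}) k := (Ideal.Quotient.lift (Ideal.span {f})
    (residue Q) ((Ideal.span_singleton_le_iff_mem _).2 hfk)).toAlgebra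
  have : IsScalarTower Q (Q ⧸ Ideal.span {f}) k := .of_algebraMap_eq fun _ => rfl
  have h0 : RingHom.ker (algebraMap Q Q) = Ideal.span {0} := by
    rw [Ideal.span_singleton_zero]
    exact (RingHom.injective_iff_ker_eq_bot _).1 Function.injective_id
  rw [H.bettiRank_eq Function.surjective_id h0 hk (zero_mem _),
    H'.bettiRank_eq Ideal.Quotient.mk_surjective Ideal.mk_ker hk hfk,
    H.complex_eq_of_sub_mem_maximalIdeal H' hDD' hk (zero_mem _) hfk]

/-- Let `f, g` be an exact pair of zerodivisors in a Noetherian local ring `Q`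
with `f ∈ m²`, and set `R = Q/(f)`. Then the residue field has the same Betti
numbers over `Q` and over `R`: `β_i^Q(k) = β_i^R(k)` for all `i ≥ 0`, i.e.
`P_k^Q(t) = P_k^R(t)`. -/
theorem betti_residueField_eq_of_exact_zerodivisor_mem_sq
    (Q : Type) [CommRing Q] [IsNoetherianRing Q] [IsLocalRing Q]
    (f g : Q) (hf0 : f ≠ 0) (hg0 : g ≠ 0)
    (hfm : f ∈ IsLocalRing.maximalIdeal Q) (hgm : g ∈ IsLocalRing.maximalIdeal Q)
    (hfm2 : f ∈ (IsLocalRing.maximalIdeal Q) ^ 2)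
    (hannf : ∀ x : Q, x * f = 0 ↔ x ∈ Ideal.span {g})
    (hanng : ∀ x : Q, x * g = 0 ↔ x ∈ Ideal.span {f})
    [IsLocalRing (Q ⧸ Ideal.span {f})]
    (i : ℕ) :
    bettiNumber Q (IsLocalRing.ResidueField Q) i =
      bettiNumber (Q ⧸ Ideal.span {f})
        (IsLocalRing.ResidueField (Q ⧸ Ideal.span {f})) i :=
  congrArg Cardinal.toNat
    (betti_residueField_eq_of_exact_zerodivisor_mem_sq_general hgm hfm2 hannf hanng i)
end

section
/- Let (Q, m, k) be a commutative Noetherian local ring and let f, g be an exact pair of zerodivisors in m, i.e. f and g are nonzero elements of m with ann_Q(f) = (g) and ann_Q(g) = (f). Set R = Q/(f). Then for every finitely generated R-module M and every integer i ≥ 0 one has the coefficient-wise inequality β_i^Q(M) ≤ Σ_{j=0}^{i} β_j^R(M). (Equivalently, P_M^Q(t) ≼ P_M^R(t)/(1−t) coefficient-wise; this is the case n = m = 1 of the general inequality P_M^Q(t) ≼ (1+t)^{n−m}(1−t)^{−m}·P_M^R(t) for quasi-complete intersection homomorphisms.) -/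
open CategoryTheory TensorProduct

/-!
Let `0 → N → R^n → M → 0` be a minimal presentation, so that `n = β_0^R(M)` and
`β_j^R(N) = β_{j+1}^R(M)`. For an `R`-module `M` regarded over `Q`, the long exact sequence of
`Tor^Q(-, k)` gives `ℓ(Tor_{i+1}^Q(M, k)) ≤ n * ℓ(Tor_{i+1}^Q(R, k)) + ℓ(Tor_i^Q(N, k))`; iterating
this bounds `β_i^Q(M)` by the convolution of the Betti numbers `β_p^R(M)` with the lengths
`ℓ(Tor_q^Q(R, k))`. For `R = Q/(f)` the exact sequences `0 → Q/(g) → Q → Q/(f) → 0` and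
`0 → Q/(f) → Q → Q/(g) → 0` shift the Tor modules of `Q/(f)` and `Q/(g)` into each other,
so each of these lengths is at most `ℓ(k) = 1`.
-/

open CategoryTheory.MonoidalCategory

universe u v w

section TorLongExactSequence

variable {A : Type u} [CommRing A] (L : ModuleCat.{u} A) {S : ShortComplex (ModuleCat.{u} A)}

/-- The functor `M ↦ Tor_i(M, L)`. As Mathlib derives `Tor` in its second argument, a long exact
sequence in `M` is obtained by tensoring a projective resolution of `L`. -/
noncomputable abbrev torFunctor (i : ℕ) : ModuleCat.{u} A ⥤ ModuleCat.{u} A :=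
  (Tor (ModuleCat A) i).flip.obj L

/-- The functor `M ↦ M ⊗ K` for a fixed chain complex `K`. -/
noncomputable def tensorComplex (K : ChainComplex (ModuleCat.{u} A) ℕ) :
    ModuleCat.{u} A ⥤ ChainComplex (ModuleCat.{u} A) ℕ where
  obj M := (((tensoringLeft _).obj M).mapHomologicalComplex _).obj K
  map φ := (NatTrans.mapHomologicalComplex ((tensoringLeft _).map φ) _).app K

instance (K : ChainComplex (ModuleCat.{u} A) ℕ) : (tensorComplex K).Additive where
  map_add {_ _ φ ψ} := by
    ext1 i
    exact MonoidalPreadditive.add_whiskerRight φ ψ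

/-- The functor `M ↦ H_i(M ⊗ K)`, which computes `Tor_i(M, L)` when `K` resolves `L`. -/
noncomputable def tensorHomology (K : ChainComplex (ModuleCat.{u} A) ℕ) (i : ℕ) :
    ModuleCat.{u} A ⥤ ModuleCat.{u} A :=
  tensorComplex K ⋙ HomologicalComplex.homologyFunctor _ _ i

instance (K : ChainComplex (ModuleCat.{u} A) ℕ) (i : ℕ) : (tensorHomology K i).Additive :=
  inferInstanceAs (tensorComplex K ⋙ HomologicalComplex.homologyFunctor _ _ i).Additive

theorem shortExact_map_tensorComplex (hS : S.ShortExact)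
    (K : ChainComplex (ModuleCat.{u} A) ℕ) [∀ i, Module.Flat A (K.X i)] :
    (S.map (tensorComplex K)).ShortExact :=
  HomologicalComplex.shortExact_of_degreewise_shortExact _ fun i ↦
    hS.map_of_exact (tensorRight (K.X i))

/-- `Tor_i(M, L) ≅ H_i(M ⊗ K)`, naturally in `M`, for the chosen projective resolution `K` of
`L`. -/
noncomputable def torFunctorIso (i : ℕ) :
    torFunctor L i ≅ tensorHomology (projectiveResolution L).complex i :=
  NatIso.ofComponents (fun _ ↦ (projectiveResolution L).isoLeftDerivedObj _ i) fun φ ↦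
    (Iso.eq_comp_inv _).1 <|
      (ProjectiveResolution.leftDerived_app_eq ((tensoringLeft (ModuleCat.{u} A)).map φ)
        (projectiveResolution L) i).trans (Category.assoc _ _ _).symm

instance (i : ℕ) : (torFunctor L i).Additive :=
  Functor.additive_of_iso (torFunctorIso L i).symm

instance (i : ℕ) : Module.Flat A ((projectiveResolution L).complex.X i) :=
  have : Module.Projective A ((projectiveResolution L).complex.X i) :=
    (IsProjective.iff_projective _).2 ((projectiveResolution L).projective i)
  inferInstance

/-- The connecting map `H_{i+1}(M₃ ⊗ K) ⟶ H_i(M₁ ⊗ K)` of a short exact sequence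
`0 ⟶ M₁ ⟶ M₂ ⟶ M₃ ⟶ 0`, for a complex `K` of flat modules. -/
noncomputable def tensorHomologyδ (hS : S.ShortExact) (K : ChainComplex (ModuleCat.{u} A) ℕ)
    [∀ i, Module.Flat A (K.X i)] (i : ℕ) :
    (tensorHomology K (i + 1)).obj S.X₃ ⟶ (tensorHomology K i).obj S.X₁ :=
  (shortExact_map_tensorComplex hS K).δ (i + 1) i (ComplexShape.down_mk (i + 1) i rfl)

theorem tensorHomologyδ_comp_map (hS : S.ShortExact) (K : ChainComplex (ModuleCat.{u} A) ℕ)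
    [∀ i, Module.Flat A (K.X i)] (i : ℕ) :
    tensorHomologyδ hS K i ≫ (tensorHomology K i).map S.f = 0 :=
  (shortExact_map_tensorComplex hS K).δ_comp (i + 1) i _

theorem map_comp_tensorHomologyδ (hS : S.ShortExact) (K : ChainComplex (ModuleCat.{u} A) ℕ)
    [∀ i, Module.Flat A (K.X i)] (i : ℕ) :
    (tensorHomology K (i + 1)).map S.g ≫ tensorHomologyδ hS K i = 0 :=
  (shortExact_map_tensorComplex hS K).comp_δ (i + 1) i _

/-- The connecting map `Tor_{i+1}(M₃, L) ⟶ Tor_i(M₁, L)` of a short exact sequence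
`0 ⟶ M₁ ⟶ M₂ ⟶ M₃ ⟶ 0`. -/
noncomputable def torδ (hS : S.ShortExact) (i : ℕ) :
    (torFunctor L (i + 1)).obj S.X₃ ⟶ (torFunctor L i).obj S.X₁ :=
  (torFunctorIso L (i + 1)).hom.app S.X₃ ≫
    tensorHomologyδ hS (projectiveResolution L).complex i ≫ (torFunctorIso L i).inv.app S.X₁

theorem torδ_comp_map (hS : S.ShortExact) (i : ℕ) :
    torδ L hS i ≫ (torFunctor L i).map S.f = 0 := by
  rw [torδ, Category.assoc, Category.assoc, ← NatTrans.naturality,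
    ← Category.assoc (tensorHomologyδ _ _ _), tensorHomologyδ_comp_map, Limits.zero_comp,
    Limits.comp_zero]

theorem map_comp_torδ (hS : S.ShortExact) (i : ℕ) :
    (torFunctor L (i + 1)).map S.g ≫ torδ L hS i = 0 := by
  rw [torδ, NatTrans.naturality_assoc, ← Category.assoc ((tensorHomology _ _).map _),
    map_comp_tensorHomologyδ, Limits.zero_comp, Limits.comp_zero]

theorem exact_torδ_map (hS : S.ShortExact) (i : ℕ) :
    (ShortComplex.mk _ _ (torδ_comp_map L hS i)).Exact :=
  have : (ShortComplex.mk _ _ (tensorHomologyδ_comp_map hS _ i)).Exact :=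
    (shortExact_map_tensorComplex hS (projectiveResolution L).complex).homology_exact₁ (i + 1) i _
  (ShortComplex.exact_iff_of_iso (ShortComplex.isoMk ((torFunctorIso L (i + 1)).app _)
    ((torFunctorIso L i).app _) ((torFunctorIso L i).app _)
    (by simp [torδ]) ((torFunctorIso L i).hom.naturality S.f).symm)).2 this

theorem exact_map_torδ (hS : S.ShortExact) (i : ℕ) :
    (ShortComplex.mk _ _ (map_comp_torδ L hS i)).Exact :=
  have : (ShortComplex.mk _ _ (map_comp_tensorHomologyδ hS _ i)).Exact :=
    (shortExact_map_tensorComplex hS (projectiveResolution L).complex).homology_exact₃ (i + 1) i _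
  (ShortComplex.exact_iff_of_iso (ShortComplex.isoMk ((torFunctorIso L (i + 1)).app _)
    ((torFunctorIso L (i + 1)).app _) ((torFunctorIso L i).app _)
    ((torFunctorIso L (i + 1)).hom.naturality S.g).symm (by simp [torδ]))).2 this

/-- `Tor_0(M, L) ≅ M ⊗ L`. -/
noncomputable def torZeroIso (M : ModuleCat.{u} A) : (torFunctor L 0).obj M ≅ M ⊗ L :=
  (tensorLeft M).leftDerivedZeroIsoSelf.app L

theorem epi_torFunctor_zero_map (hS : S.ShortExact) : Epi ((torFunctor L 0).map S.g) := by
  let K := (projectiveResolution L).complex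
  have : Epi ((tensorComplex K).map S.g) := (shortExact_map_tensorComplex hS K).epi_g
  have : Epi ((tensorHomology K 0).map S.g) :=
    HomologicalComplex.epi_homologyMap_of_epi_of_not_rel ((tensorComplex K).map S.g) 0 (by simp)
  rw [← NatIso.naturality_2 (torFunctorIso L 0) S.g]
  infer_instance

theorem exactAt_tensorComplex_obj {K : ChainComplex (ModuleCat.{u} A) ℕ} {i : ℕ}
    (hK : K.ExactAt i) (M : ModuleCat.{u} A) [Module.Flat A M] :
    ((tensorComplex K).obj M).ExactAt i :=
  Module.Flat.lTensor_shortComplex_exact M (K.sc i) hK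

theorem isZero_torFunctor_succ_obj_of_flat (M : ModuleCat.{u} A) [Module.Flat A M] (i : ℕ) :
    Limits.IsZero ((torFunctor L (i + 1)).obj M) :=
  (exactAt_tensorComplex_obj ((projectiveResolution L).complex_exactAt_succ i)
    M).isZero_homology.of_iso ((torFunctorIso L (i + 1)).app M)

theorem mono_torδ_of_flat (hS : S.ShortExact) [Module.Flat A S.X₂] (i : ℕ) :
    Mono (torδ L hS i) :=
  (exact_map_torδ L hS i).mono_g ((isZero_torFunctor_succ_obj_of_flat L S.X₂ i).eq_of_src _ _)

theorem isIso_torδ_of_flat (hS : S.ShortExact) [Module.Flat A S.X₂]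
    [Mono ((torFunctor L 0).map S.g)] (i : ℕ) : IsIso (torδ L hS i) := by
  have := mono_torδ_of_flat L hS i
  have : Epi (torδ L hS i) := (exact_torδ_map L hS i).epi_f <| by
    cases i with
    | zero =>
      rw [← cancel_mono ((torFunctor L 0).map S.g), ← Functor.map_comp, S.zero, Functor.map_zero,
        Limits.zero_comp]
    | succ i => exact (isZero_torFunctor_succ_obj_of_flat L S.X₂ i).eq_of_tgt _ _
  exact isIso_of_mono_of_epi _

end TorLongExactSequence

section Length

theorem length_le_add_of_exact {A X Y Z : Type*} [Ring A] [AddCommGroup X] [Module A X]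
    [AddCommGroup Y] [Module A Y] [AddCommGroup Z] [Module A Z] {f : X →ₗ[A] Y} {g : Y →ₗ[A] Z}
    (h : Function.Exact f g) : Module.length A Y ≤ Module.length A X + Module.length A Z := by
  rw [Module.length_eq_add_of_exact g.ker.subtype g.rangeRestrict g.ker.subtype_injective
    g.surjective_rangeRestrict (by
      rw [LinearMap.exact_iff, LinearMap.ker_rangeRestrict, Submodule.range_subtype]),
    LinearMap.exact_iff.1 h]
  exact add_le_add (Module.length_le_of_surjective _ f.surjective_rangeRestrict)
    (Module.length_le_of_injective _ g.range.subtype_injective)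

theorem injective_of_surjective_of_length_le {A X Y : Type*} [Ring A] [AddCommGroup X]
    [Module A X] [AddCommGroup Y] [Module A Y] {f : X →ₗ[A] Y} (hf : Function.Surjective f)
    (hle : Module.length A X ≤ Module.length A Y) (hY : Module.length A Y ≠ ⊤) :
    Function.Injective f := by
  rw [Module.length_eq_add_of_exact f.ker.subtype f f.ker.subtype_injective hf
    (LinearMap.exact_subtype_ker_map f)] at hle
  have hker : Module.length A f.ker ≤ 0 :=
    (ENat.add_le_add_iff_right hY).1 (hle.trans_eq (zero_add _).symm)
  rw [nonpos_iff_eq_zero, Module.length_eq_zero_iff, Submodule.subsingleton_iff_eq_bot] at hker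
  exact LinearMap.ker_eq_bot.1 hker

theorem length_obj_pi {A : Type*} {B : Type*} [Ring A] [Ring B] {ι : Type} [Fintype ι]
    (F : ModuleCat.{v} A ⥤ ModuleCat.{w} B) [F.Additive] (X : ModuleCat.{v} A) :
    Module.length B (F.obj (ModuleCat.of A (ι → X))) =
      Fintype.card ι * Module.length B (F.obj X) := by
  let e := F.mapIso (ModuleCat.biproductIsoPi fun _ : ι ↦ X).symm ≪≫ F.mapBiproduct _ ≪≫
    ModuleCat.biproductIsoPi fun _ : ι ↦ F.obj X
  rw [e.toLinearEquiv.length_eq, Module.length_pi, ENat.card_eq_coe_fintype_card]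

variable {A : Type u} [CommRing A] (L : ModuleCat.{u} A) {S : ShortComplex (ModuleCat.{u} A)}

theorem length_torFunctor_succ_X₃_le (hS : S.ShortExact) (i : ℕ) :
    Module.length A ((torFunctor L (i + 1)).obj S.X₃) ≤
      Module.length A ((torFunctor L (i + 1)).obj S.X₂) +
        Module.length A ((torFunctor L i).obj S.X₁) :=
  length_le_add_of_exact <|
    (ShortComplex.ShortExact.moduleCat_exact_iff_function_exact _).1 (exact_map_torδ L hS i)

theorem length_torFunctor_zero_X₃_le (hS : S.ShortExact) :
    Module.length A ((torFunctor L 0).obj S.X₃) ≤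
      Module.length A ((torFunctor L 0).obj S.X₂) :=
  Module.length_le_of_surjective _ <|
    (ModuleCat.epi_iff_surjective _).1 (epi_torFunctor_zero_map L hS)

theorem length_torFunctor_succ_X₃_le_of_flat (hS : S.ShortExact) [Module.Flat A S.X₂] (i : ℕ) :
    Module.length A ((torFunctor L (i + 1)).obj S.X₃) ≤
      Module.length A ((torFunctor L i).obj S.X₁) :=
  Module.length_le_of_injective _ <|
    (ModuleCat.mono_iff_injective _).1 (mono_torδ_of_flat L hS i)

theorem length_torFunctor_zero_self :
    Module.length A ((torFunctor L 0).obj (ModuleCat.of A A)) = Module.length A L :=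
  ((torZeroIso L (ModuleCat.of A A)).toLinearEquiv ≪≫ₗ TensorProduct.lid A L).length_eq

end Length

section ExactPair

variable {A : Type u} [CommRing A] {f g : A}

/-- `f` and `g` form an exact pair of zerodivisors: each generates the annihilator of the other.
Unlike in the usual definition, neither is required to be nonzero. -/
structure IsExactPair (f g : A) : Prop where
  mul_fst_eq_zero_iff : ∀ x, x * f = 0 ↔ x ∈ Ideal.span {g}
  mul_snd_eq_zero_iff : ∀ x, x * g = 0 ↔ x ∈ Ideal.span {f}

theorem IsExactPair.symm (h : IsExactPair f g) : IsExactPair g f :=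
  ⟨h.2, h.1⟩

theorem IsExactPair.ker_toSpanSingleton (h : IsExactPair f g) :
    (LinearMap.toSpanSingleton A A f).ker = Ideal.span {g} :=
  SetLike.ext h.mul_fst_eq_zero_iff

/-- The sequence `0 ⟶ A/(g) ⟶ A ⟶ A/(f) ⟶ 0` whose first map is multiplication by `f`. -/
abbrev IsExactPair.shortComplex (h : IsExactPair f g) : ShortComplex (ModuleCat.{u} A) where
  X₁ := ModuleCat.of A (A ⧸ Ideal.span {g})
  X₂ := ModuleCat.of A A
  X₃ := ModuleCat.of A (A ⧸ Ideal.span {f})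
  f := ModuleCat.ofHom <|
    (Ideal.span {g}).liftQ (LinearMap.toSpanSingleton A A f) h.ker_toSpanSingleton.ge
  g := ModuleCat.ofHom (Ideal.span {f}).mkQ
  zero := by
    ext
    exact Ideal.Quotient.eq_zero_iff_mem.2
      (Ideal.mul_mem_left _ (1 : A) (Ideal.mem_span_singleton_self f))

theorem IsExactPair.shortExact_shortComplex (h : IsExactPair f g) :
    h.shortComplex.ShortExact := by
  refine ModuleCat.shortComplex_shortExact _ ?_ ?_ (Submodule.mkQ_surjective _)
  · refine LinearMap.exact_iff.2 ?_
    change (Ideal.span {f}).mkQ.ker =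
      ((Ideal.span {g}).liftQ _ h.ker_toSpanSingleton.ge).range
    rw [Submodule.ker_mkQ, Submodule.range_liftQ, LinearMap.range_toSpanSingleton]
  · exact LinearMap.ker_eq_bot.1 (Submodule.ker_liftQ_eq_bot _ _ _ h.ker_toSpanSingleton.le)

theorem IsExactPair.length_torFunctor_quotient_le (h : IsExactPair f g) (L : ModuleCat.{u} A)
    (i : ℕ) :
    Module.length A ((torFunctor L i).obj (ModuleCat.of A (A ⧸ Ideal.span {f}))) ≤
      Module.length A L := by
  induction i generalizing f g with
  | zero =>
    exact (length_torFunctor_zero_X₃_le L h.shortExact_shortComplex).trans_eq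
      (length_torFunctor_zero_self L)
  | succ i ih =>
    exact (length_torFunctor_succ_X₃_le_of_flat L h.shortExact_shortComplex i).trans (ih h.symm)

end ExactPair

section ResidueField

open IsLocalRing

variable {A : Type*} [CommRing A] [IsLocalRing A]

theorem length_residueField : Module.length A (ResidueField A) = 1 := by
  rw [Module.length_eq_of_surjective (R := ResidueField A) residue_surjective,
    Module.length_eq_one]

theorem finrank_residueField_tensorProduct (V : Type*) [AddCommGroup V] [Module A V]
    [Module (ResidueField A) V] [IsScalarTower A (ResidueField A) V] :
    Module.finrank (ResidueField A) (ResidueField A ⊗[A] V) =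
      Module.finrank (ResidueField A) V :=
  have : TensorProduct.CompatibleSMul A (ResidueField A) (ResidueField A) V :=
    .of_algebraMap_surjective _ _ residue_surjective
  (TensorProduct.lidOfCompatibleSMul A (ResidueField A) V).finrank_eq

theorem finrank_residueField_tensorProduct_le_length (M : Type*) [AddCommGroup M]
    [Module A M] :
    (Module.finrank (ResidueField A) (ResidueField A ⊗[A] M) : ℕ∞) ≤ Module.length A M := by
  refine le_trans ?_ (Module.length_le_of_surjective _
    (TensorProduct.mk_surjective A M (ResidueField A) residue_surjective))
  rw [Module.length_eq_of_surjective (R := ResidueField A) residue_surjective,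
    Module.length_eq_rank]
  exact ENat.natCast_toNat_le_self _

theorem exists_surjective_pi_finrank_residueField_tensorProduct (M : Type*) [AddCommGroup M]
    [Module A M] [Module.Finite A M] :
    ∃ φ : (Fin (Module.finrank (ResidueField A) (ResidueField A ⊗[A] M)) → A) →ₗ[A] M,
      Function.Surjective φ := by
  let b := Module.finBasis (ResidueField A) (ResidueField A ⊗[A] M)
  choose m hm using fun i ↦
    TensorProduct.mk_surjective A M (ResidueField A) residue_surjective (b i)
  refine ⟨Fintype.linearCombination A m, ?_⟩
  rw [← LinearMap.range_eq_top, Fintype.range_linearCombination,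
    span_eq_top_of_tmul_eq_basis m b hm]

end ResidueField

section BettiNumber

open IsLocalRing

variable (A : Type) [CommRing A] [IsLocalRing A] (M : Type) [AddCommGroup M] [Module A M]

theorem bettiNumber_zero :
    bettiNumber A M 0 = Module.finrank (ResidueField A) (ResidueField A ⊗[A] M) := by
  rw [← finrank_residueField_tensorProduct (ResidueField A ⊗[A] M)]
  exact (((torZeroIso _ _).toLinearEquiv ≪≫ₗ
    TensorProduct.comm A M (ResidueField A)).baseChange A (ResidueField A) _ _).finrank_eq

theorem length_torFunctor_zero_eq_bettiNumber [Module.Finite A M] :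
    Module.length A ((torFunctor (.of A (ResidueField A)) 0).obj (.of A M)) =
      bettiNumber A M 0 := by
  rw [bettiNumber_zero, ← Module.length_eq_finrank,
    ← Module.length_eq_of_surjective (S := A) residue_surjective]
  exact ((torZeroIso _ _).toLinearEquiv ≪≫ₗ TensorProduct.comm A M (ResidueField A)).length_eq

theorem exists_surjective_pi_bettiNumber_zero [Module.Finite A M] :
    ∃ φ : (Fin (bettiNumber A M 0) → A) →ₗ[A] M, Function.Surjective φ :=
  bettiNumber_zero A M ▸ exists_surjective_pi_finrank_residueField_tensorProduct M

variable {A M} in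
theorem bettiNumber_ker [Module.Finite A M] {φ : (Fin (bettiNumber A M 0) → A) →ₗ[A] M}
    (hφ : Function.Surjective φ) (i : ℕ) :
    bettiNumber A φ.ker i = bettiNumber A M (i + 1) := by
  let k := ModuleCat.of A (ResidueField A)
  have hS := LinearMap.shortExact_shortComplexKer hφ
  have hlength : Module.length A ((torFunctor k 0).obj φ.shortComplexKer.X₂) =
      Module.length A ((torFunctor k 0).obj φ.shortComplexKer.X₃) := by
    rw [length_torFunctor_zero_eq_bettiNumber A M, length_obj_pi (torFunctor k 0) (.of A A),
      length_torFunctor_zero_self, length_residueField, Fintype.card_fin, mul_one]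
  have hfinite : Module.length A ((torFunctor k 0).obj φ.shortComplexKer.X₃) ≠ ⊤ := by
    rw [length_torFunctor_zero_eq_bettiNumber]
    exact ENat.natCast_ne_top _
  have : Mono ((torFunctor k 0).map φ.shortComplexKer.g) :=
    (ModuleCat.mono_iff_injective _).2 <| injective_of_surjective_of_length_le
      ((ModuleCat.epi_iff_surjective _).1 (epi_torFunctor_zero_map k hS)) hlength.le hfinite
  have : IsIso (torδ k hS i) := isIso_torδ_of_flat k hS i
  exact ((asIso (torδ k hS i)).toLinearEquiv.baseChange A (ResidueField A) _ _).finrank_eq.symm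

end BettiNumber

section ChangeOfRings

open Finset

variable {Q R : Type} [CommRing Q] [CommRing R] [Algebra Q R] [IsLocalRing R] [IsNoetherianRing R]

theorem length_torFunctor_le_sum_antidiagonal (L : ModuleCat.{0} Q) (i : ℕ) (M : Type)
    [AddCommGroup M] [Module Q M] [Module R M] [IsScalarTower Q R M] [Module.Finite R M] :
    Module.length Q ((torFunctor L i).obj (.of Q M)) ≤ ∑ p ∈ antidiagonal i,
      bettiNumber R M p.1 * Module.length Q ((torFunctor L p.2).obj (.of Q R)) := by
  have hfree (j n : ℕ) : Module.length Q ((torFunctor L j).obj (.of Q (Fin n → R))) =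
      n * Module.length Q ((torFunctor L j).obj (.of Q R)) := by
    simpa using length_obj_pi (ι := Fin n) (torFunctor L j) (.of Q R)
  induction i generalizing M with
  | zero =>
    obtain ⟨φ, hφ⟩ := exists_surjective_pi_bettiNumber_zero R M
    have hS := LinearMap.shortExact_shortComplexKer (f := φ.restrictScalars Q) hφ
    simpa using (length_torFunctor_zero_X₃_le L hS).trans_eq (hfree 0 _)
  | succ i ih =>
    obtain ⟨φ, hφ⟩ := exists_surjective_pi_bettiNumber_zero R M
    have hS := LinearMap.shortExact_shortComplexKer (f := φ.restrictScalars Q) hφ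
    rw [Nat.sum_antidiagonal_succ]
    simp only [← bettiNumber_ker hφ]
    exact (length_torFunctor_succ_X₃_le L hS i).trans (add_le_add (hfree (i + 1) _).le (ih φ.ker))

end ChangeOfRings

theorem betti_base_le_sum_of_exact_zerodivisor_general {Q : Type} [CommRing Q] [IsLocalRing Q]
    {f g : Q} (h : IsExactPair f g) [IsLocalRing (Q ⧸ Ideal.span {f})]
    [IsNoetherianRing (Q ⧸ Ideal.span {f})] (M : Type) [AddCommGroup M] [Module Q M]
    [Module (Q ⧸ Ideal.span {f}) M] [IsScalarTower Q (Q ⧸ Ideal.span {f}) M]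
    [Module.Finite (Q ⧸ Ideal.span {f}) M] (i : ℕ) :
    bettiNumber Q M i ≤
      ∑ j ∈ Finset.range (i + 1), bettiNumber (Q ⧸ Ideal.span {f}) M j := by
  let R := Q ⧸ Ideal.span {f}
  let k := ModuleCat.of Q (IsLocalRing.ResidueField Q)
  rw [← ENat.natCast_le_natCast]
  calc (bettiNumber Q M i : ℕ∞)
      ≤ Module.length Q ((torFunctor k i).obj (.of Q M)) :=
        finrank_residueField_tensorProduct_le_length _
    _ ≤ ∑ p ∈ Finset.HasAntidiagonal.antidiagonal i,
          bettiNumber R M p.1 * Module.length Q ((torFunctor k p.2).obj (.of Q R)) :=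
        length_torFunctor_le_sum_antidiagonal k i M
    _ ≤ ∑ p ∈ Finset.HasAntidiagonal.antidiagonal i, (bettiNumber R M p.1 : ℕ∞) :=
        Finset.sum_le_sum fun p _ ↦ mul_le_of_le_one_right' <|
          (h.length_torFunctor_quotient_le k p.2).trans_eq length_residueField
    _ = (∑ j ∈ Finset.range (i + 1), bettiNumber R M j : ℕ) := by
        rw [Finset.Nat.sum_antidiagonal_eq_sum_range_succ_mk, Nat.cast_sum]

/-- Let `f, g` be an exact pair of zerodivisors in the maximal ideal of a
Noetherian local ring `Q` and set `R = Q/(f)`. Then for every finitely generated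
`R`-module `M` and all `i ≥ 0`, `β_i^Q(M) ≤ ∑_{j=0}^{i} β_j^R(M)`, i.e.
`P_M^Q(t) ≼ P_M^R(t)/(1−t)` coefficient-wise. -/
theorem betti_base_le_sum_of_exact_zerodivisor
    (Q : Type) [CommRing Q] [IsNoetherianRing Q] [IsLocalRing Q]
    (f g : Q) (hf0 : f ≠ 0) (hg0 : g ≠ 0)
    (hfm : f ∈ IsLocalRing.maximalIdeal Q) (hgm : g ∈ IsLocalRing.maximalIdeal Q)
    (hannf : ∀ x : Q, x * f = 0 ↔ x ∈ Ideal.span {g})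
    (hanng : ∀ x : Q, x * g = 0 ↔ x ∈ Ideal.span {f})
    [IsLocalRing (Q ⧸ Ideal.span {f})]
    (M : Type) [AddCommGroup M] [Module Q M] [Module (Q ⧸ Ideal.span {f}) M]
    [IsScalarTower Q (Q ⧸ Ideal.span {f}) M]
    [Module.Finite (Q ⧸ Ideal.span {f}) M]
    (i : ℕ) :
    bettiNumber Q M i ≤
      ∑ j ∈ Finset.range (i + 1), bettiNumber (Q ⧸ Ideal.span {f}) M j :=
  betti_base_le_sum_of_exact_zerodivisor_general ⟨hannf, hanng⟩ M i
end
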